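/- arXiv:2403.07629 — 3 statements merged into one kernel-verified Lean document; each statement's English description precedes it below -/
import Mathlib

section
/- Let T be a doubly-regular tournament of order n = 4t+3 (t ≥ 0 an integer). Then every arc of T lies on exactly 2(t+1)(t−1)t²(16t²−4t−11) directed cycles of length 8. -/
/-- A tournament on the vertex type `V`: for every pair of distinct vertices,
exactly one of the two possible arcs is present. -/
structure Tournament (V : Type*) where
  r : V → V → Prop
  dec : DecidableRel r
  irrefl : ∀ i, ¬ r i i
  total : ∀ i j, i ≠ j → (r i j ↔ ¬ r j i)

attribute [instance] Tournament.dec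

/-- A doubly-regular tournament of order `4t+3`: every pair of distinct vertices
jointly dominates exactly `t` vertices. -/
def Tournament.IsDoublyRegular {V : Type*} (T : Tournament V) (t : ℕ) : Prop :=
  ∀ i j : V, i ≠ j → Nat.card {k : V // T.r i k ∧ T.r j k} = t

/-! The directed 8-cycles through the arc `j → i` are the closed walks of length eight through that
arc in which no vertex repeats. If a closed 8-walk of a tournament is at the same vertex at the
times `p < r` and also at the times `q < s`, where `p < q`, then `p < q < r < s`, since otherwise
the walk would traverse some arc in both directions. Sorting walks by their last repeat therefore
expresses the number of 8-cycles as an alternating sum over families of at most four pairwise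
crossing repeats. The walks with a prescribed such family are counted by an entry of a matrix made
from powers of the adjacency matrix `A` by products, entrywise products and transposition. Double
regularity says that the span of `I`, `A` and `Aᵀ` is closed under these operations, so that every
count is a polynomial in `t`. -/

open Finset Matrix

namespace Tournament

variable {V : Type*} (T : Tournament V)

theorem not_r_of_r {x y : V} (h : T.r x y) : ¬ T.r y x := by
  rcases eq_or_ne x y with rfl | hxy
  · exact T.irrefl x
  · exact (T.total x y hxy).1 h

theorem ne_of_r {x y : V} (h : T.r x y) : x ≠ y := fun hxy => T.irrefl y (hxy ▸ h)

section ClosedWalks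

/-- The infinite periodic sequence that runs through the entries of the tuple `v` over and over. -/
def cyclicExtension {n : ℕ} (v : Fin (n + 1) → V) (k : ℕ) : V := v (Fin.ofNat (n + 1) k)

variable {T} {w : ℕ → V}

theorem no_reversal (hw : ∀ k, T.r (w k) (w (k + 1))) {a b : ℕ} (h : w (a + 1) = w b) :
    w (b + 1) ≠ w a := fun h' => T.not_r_of_r (h ▸ hw a) (h' ▸ hw b)

theorem add_three_le_of_repeat (hw : ∀ k, T.r (w k) (w (k + 1))) {p r : ℕ} (hpr : p < r)
    (h : w p = w r) : p + 3 ≤ r := by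
  by_contra! hr
  obtain rfl | rfl : r = p + 1 ∨ r = p + 2 := by lia
  · exact T.ne_of_r (hw p) h
  · exact no_reversal hw rfl h.symm

theorem lt_add_six_of_repeat (hw : ∀ k, T.r (w k) (w (k + 1))) (hper : Function.Periodic w 8)
    {p r : ℕ} (hr : r < 8) (h : w p = w r) : r < p + 6 := by
  have := add_three_le_of_repeat hw (p := r) (r := p + 8) (by lia) (by rw [hper, h])
  lia

theorem repeats_cross (hw : ∀ k, T.r (w k) (w (k + 1))) (hper : Function.Periodic w 8)
    {p r q s : ℕ} (hpr : p < r) (hr : r < 8) (hqs : q < s) (hs : s < 8) (hwpr : w p = w r)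
    (hwqs : w q = w s) (hpq : p < q) : q < r ∧ r < s := by
  have hpr3 := add_three_le_of_repeat hw hpr hwpr
  have hqs3 := add_three_le_of_repeat hw hqs hwqs
  have hpr5 := lt_add_six_of_repeat hw hper hr hwpr
  by_contra! hcross
  rcases eq_or_ne q r with rfl | hqr
  · have := lt_add_six_of_repeat hw hper hs (hwpr.trans hwqs)
    lia
  rcases eq_or_ne s r with rfl | hsr
  · have := add_three_le_of_repeat hw hpq (hwpr.trans hwqs.symm)
    lia
  rcases hqr.lt_or_gt with hqr | hrq
  · obtain ⟨rfl, rfl, rfl⟩ : q = p + 1 ∧ s = p + 4 ∧ r = p + 5 := by grind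
    exact no_reversal hw hwqs hwpr.symm
  · obtain ⟨rfl, rfl, rfl, rfl⟩ : p = 0 ∧ r = 3 ∧ q = 4 ∧ s = 7 := by grind
    exact no_reversal hw hwqs ((hper 0).trans hwpr)

theorem injOn_cyclicExtension_iff {n : ℕ} {v : Fin (n + 1) → V} :
    Set.InjOn (cyclicExtension v) (Ico 0 (n + 1)) ↔ Function.Injective v := by
  have hv (k : Fin (n + 1)) : cyclicExtension v k = v k := by simp [cyclicExtension]
  constructor
  · intro h a b hab
    exact Fin.ext (h (by simpa using a.is_le) (by simpa using b.is_le) (by rw [hv, hv, hab]))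
  · intro h a ha b hb hab
    simp only [coe_Ico, Set.mem_Ico] at ha hb
    rw [← Fin.val_mk ha.2, ← Fin.val_mk hb.2, hv, hv] at hab
    exact congr_arg Fin.val (h hab)

theorem periodic_cyclicExtension {n : ℕ} (v : Fin (n + 1) → V) :
    Function.Periodic (cyclicExtension v) (n + 1) := fun k => by
  simp [cyclicExtension, Fin.ofNat]

end ClosedWalks

/-- The adjacency matrix of a tournament, with rows indexed by the tails of the arcs. -/
def adjMatrix : Matrix V V ℤ := Matrix.of fun x y => if T.r x y then 1 else 0

theorem adjMatrix_apply (x y : V) : T.adjMatrix x y = if T.r x y then 1 else 0 := rfl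

/-- The set of vertices dominated by `x`. -/
def outSet [Fintype V] (x : V) : Finset V := {y | T.r x y}

theorem sum_adjMatrix [Fintype V] (x : V) : ∑ y, T.adjMatrix x y = #(T.outSet x) := by
  simp [adjMatrix_apply, outSet]

theorem allOnes_eq [DecidableEq V] :
    Matrix.of (fun _ _ => 1) = 1 + T.adjMatrix + T.adjMatrixᵀ := by
  ext x y
  simp only [of_apply, Matrix.add_apply, one_apply, transpose_apply, adjMatrix_apply]
  rcases eq_or_ne x y with rfl | hxy
  · simp [T.irrefl]
  · by_cases h : T.r x y
    · simp [hxy, h, T.not_r_of_r h]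
    · simp [hxy, h, (T.total y x hxy.symm).2 h]

theorem transpose_adjMatrix [DecidableEq V] :
    T.adjMatrixᵀ = Matrix.of (fun _ _ => 1) - T.adjMatrix - 1 := by
  rw [allOnes_eq]
  abel

theorem two_mul_sum_adjMatrix (s : Finset V) :
    2 * ∑ x ∈ s, ∑ y ∈ s, T.adjMatrix x y = (#s : ℤ) * (#s - 1) := by
  classical
  have h (x y : V) : T.adjMatrix x y + T.adjMatrix y x = 1 - (1 : Matrix V V ℤ) x y := by
    have := congr_fun₂ T.allOnes_eq x y
    simp only [of_apply, Matrix.add_apply, transpose_apply] at this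
    linarith
  calc 2 * ∑ x ∈ s, ∑ y ∈ s, T.adjMatrix x y
      = ∑ x ∈ s, ∑ y ∈ s, (T.adjMatrix x y + T.adjMatrix y x) := by
        simp only [sum_add_distrib]
        rw [sum_comm (f := fun x y => T.adjMatrix y x), two_mul]
    _ = (#s : ℤ) * (#s - 1) := by
        simp only [h, one_apply, sum_sub_distrib, sum_const, sum_ite_eq, sum_ite_mem, inter_self,
          nsmul_eq_mul]
        ring

section Degrees

variable [Fintype V] {T} {t : ℕ} (hDR : T.IsDoublyRegular t)

include hDR

theorem IsDoublyRegular.card_outSet_inter [DecidableEq V] {x y : V} (hxy : x ≠ y) :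
    #(T.outSet x ∩ T.outSet y) = t := by
  rw [← hDR x y hxy, Nat.card_eq_fintype_card, Fintype.card_subtype, outSet, outSet, ← filter_and]

theorem IsDoublyRegular.card_outSet_mul (x : V) :
    (#(T.outSet x) : ℤ) * (#(T.outSet x) - 1) = #(T.outSet x) * (2 * t) := by
  classical
  have h : ∀ y ∈ T.outSet x, ∑ z ∈ T.outSet x, T.adjMatrix y z = t := by
    intro y hy
    rw [← hDR.card_outSet_inter (T.ne_of_r (mem_filter_univ y |>.1 hy))]
    simp [adjMatrix_apply, outSet, filter_and, filter_filter]
  rw [← T.two_mul_sum_adjMatrix, sum_congr rfl h, sum_const, nsmul_eq_mul]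
  ring

theorem IsDoublyRegular.card_outSet_eq_zero_or (x : V) :
    #(T.outSet x) = 0 ∨ #(T.outSet x) = 2 * t + 1 := by
  have h := hDR.card_outSet_mul x
  rcases mul_eq_mul_left_iff.1 h with h | h <;> lia

omit hDR in
theorem IsDoublyRegular.card_le_three (hDR : T.IsDoublyRegular 0) : Fintype.card V ≤ 3 := by
  have hdeg : ∀ x ∈ univ, ∑ y, T.adjMatrix x y ≤ 1 := fun x _ => by
    rw [sum_adjMatrix]
    have := hDR.card_outSet_eq_zero_or x
    lia
  have hsum := T.two_mul_sum_adjMatrix univ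
  have hle := sum_le_card_nsmul _ _ _ hdeg
  rw [card_univ, nsmul_eq_mul, mul_one] at *
  by_contra! h
  nlinarith

variable [Nontrivial V] (ht : t ≠ 0)

include ht

theorem IsDoublyRegular.card_outSet (x : V) : #(T.outSet x) = 2 * t + 1 := by
  classical
  refine (hDR.card_outSet_eq_zero_or x).resolve_left fun h => ht ?_
  obtain ⟨y, hy⟩ := exists_ne x
  rw [← hDR.card_outSet_inter hy, card_eq_zero.1 h, inter_empty, card_empty]

theorem IsDoublyRegular.card_eq : Fintype.card V = 4 * t + 3 := by
  have h := T.two_mul_sum_adjMatrix univ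
  simp only [sum_adjMatrix, hDR.card_outSet ht, sum_const, card_univ, nsmul_eq_mul] at h
  have h' : (Fintype.card V : ℤ) * (4 * t + 2) = Fintype.card V * (Fintype.card V - 1) := by
    rw [← h]
    push_cast
    ring
  have := mul_left_cancel₀ (Nat.cast_ne_zero.2 Fintype.card_ne_zero) h'
  lia

theorem IsDoublyRegular.adjMatrix_mul_allOnes :
    T.adjMatrix * Matrix.of (fun _ _ => 1) = (2 * t + 1 : ℤ) • Matrix.of (fun _ _ => 1) := by
  ext x y
  simp [mul_apply, sum_adjMatrix, hDR.card_outSet ht]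

theorem IsDoublyRegular.allOnes_mul_adjMatrix :
    Matrix.of (fun _ _ => 1) * T.adjMatrix = (2 * t + 1 : ℤ) • Matrix.of (fun _ _ => 1) := by
  classical
  have hin (y : V) : ∑ z, T.adjMatrix z y = 2 * t + 1 := by
    calc ∑ z, T.adjMatrixᵀ y z
        = Fintype.card V - #(T.outSet y) - 1 := by
          rw [T.transpose_adjMatrix]
          simp [sum_sub_distrib, sum_adjMatrix, one_apply]
      _ = 2 * t + 1 := by
          rw [hDR.card_eq ht, hDR.card_outSet ht]
          push_cast
          ring
  ext x y
  simp [mul_apply, hin]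

end Degrees

variable [DecidableEq V]

/-- The element `d I + b A + g Aᵀ` of the span of the identity and the adjacency matrix `A` with
its transpose, for `c = (d, b, g)`: its entries are `d` on the diagonal, `b` on arcs and `g` on
reversed arcs. -/
def relMatrix (c : ℤ × ℤ × ℤ) : Matrix V V ℤ :=
  c.1 • 1 + c.2.1 • T.adjMatrix + c.2.2 • T.adjMatrixᵀ

theorem relMatrix_apply (c : ℤ × ℤ × ℤ) (x y : V) :
    T.relMatrix c x y = if x = y then c.1 else if T.r x y then c.2.1 else c.2.2 := by
  simp only [relMatrix, Matrix.add_apply, Matrix.smul_apply, one_apply, transpose_apply,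
    adjMatrix_apply, smul_eq_mul]
  rcases eq_or_ne x y with rfl | hxy
  · simp [T.irrefl]
  · by_cases h : T.r x y
    · simp [hxy, h, T.not_r_of_r h]
    · simp [hxy, h, (T.total y x hxy.symm).2 h]

theorem relMatrix_apply_of_r {x y : V} (h : T.r y x) (c : ℤ × ℤ × ℤ) :
    T.relMatrix c x y = c.2.2 := by
  rw [relMatrix_apply, if_neg (T.ne_of_r h).symm, if_neg (T.not_r_of_r h)]

theorem relMatrix_hadamard (c c' : ℤ × ℤ × ℤ) :
    T.relMatrix c ⊙ T.relMatrix c' = T.relMatrix (c * c') := by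
  ext x y
  simp only [hadamard_apply, relMatrix_apply, Prod.fst_mul, Prod.snd_mul]
  split_ifs <;> rfl

/-- The coordinates of `(d I + b A + g Aᵀ)ᵀ`. -/
def swapArcs (c : ℤ × ℤ × ℤ) : ℤ × ℤ × ℤ := (c.1, c.2.2, c.2.1)

theorem relMatrix_transpose (c : ℤ × ℤ × ℤ) :
    (T.relMatrix c)ᵀ = T.relMatrix (swapArcs c) := by
  simp only [relMatrix, swapArcs, transpose_add, transpose_smul, transpose_one, transpose_transpose]
  abel

theorem relMatrix_one : T.relMatrix (1, 0, 0) = 1 := by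
  simp [relMatrix]

/-- The product of `d I + b A + g Aᵀ` and `d' I + b' A + g' Aᵀ`, in coordinates, for the adjacency
matrix `A` of a doubly-regular tournament of order `4t + 3`. -/
def schemeMul (t : ℤ) : ℤ × ℤ × ℤ → ℤ × ℤ × ℤ → ℤ × ℤ × ℤ
  | (d, b, g), (d', b', g') =>
    (d * d' + (2 * t + 1) * (b * g' + g * b'),
      d * b' + b * d' + t * (b * b' + b * g' + g * b') + (t + 1) * (g * g'),
      d * g' + g * d' + t * (g * g' + b * g' + g * b') + (t + 1) * (b * b'))

theorem schemeMul_comm (t : ℤ) (c c' : ℤ × ℤ × ℤ) : schemeMul t c c' = schemeMul t c' c := by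
  simp only [schemeMul, Prod.mk.injEq]
  refine ⟨?_, ?_, ?_⟩ <;> ring

/-- The coordinates of the powers of the adjacency matrix `A` of a doubly-regular tournament of
order `4t + 3` in the basis `I, A, Aᵀ`. -/
def powCoeff (t : ℤ) : ℕ → ℤ × ℤ × ℤ
  | 0 => (1, 0, 0)
  | m + 1 => schemeMul t (powCoeff t m) (0, 1, 0)

theorem powCoeff_succ (t : ℤ) (m : ℕ) :
    powCoeff t (m + 1) = schemeMul t (powCoeff t m) (0, 1, 0) := rfl

section DoublyRegular

variable [Fintype V] {T} {t : ℕ} (hDR : T.IsDoublyRegular t) [Nontrivial V] (ht : t ≠ 0)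

include hDR ht

theorem IsDoublyRegular.adjMatrix_mul_transpose :
    T.adjMatrix * T.adjMatrixᵀ = T.relMatrix (2 * t + 1, t, t) := by
  ext x y
  have h : (T.adjMatrix * T.adjMatrixᵀ) x y = #(T.outSet x ∩ T.outSet y) := by
    simp [mul_apply, adjMatrix_apply, outSet, ← filter_and, ← ite_and, and_comm]
  rw [h, relMatrix_apply]
  split_ifs with hxy
  · subst hxy
    simp [hDR.card_outSet ht]
  all_goals rw [hDR.card_outSet_inter hxy]

theorem IsDoublyRegular.adjMatrix_mul_self :
    T.adjMatrix * T.adjMatrix = T.relMatrix (0, t, t + 1) := by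
  have hA : T.adjMatrix = Matrix.of (fun _ _ => 1) - T.adjMatrixᵀ - 1 := by
    rw [T.allOnes_eq]
    abel
  calc T.adjMatrix * T.adjMatrix
      = T.adjMatrix * Matrix.of (fun _ _ => 1) - T.adjMatrix * T.adjMatrixᵀ - T.adjMatrix := by
        nth_rw 2 [hA]
        rw [mul_sub, mul_sub, mul_one]
    _ = T.relMatrix (0, t, t + 1) := by
        rw [hDR.adjMatrix_mul_allOnes ht, hDR.adjMatrix_mul_transpose ht, T.allOnes_eq]
        simp only [relMatrix]
        module

theorem IsDoublyRegular.transpose_mul_adjMatrix :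
    T.adjMatrixᵀ * T.adjMatrix = T.relMatrix (2 * t + 1, t, t) := by
  rw [T.transpose_adjMatrix, sub_mul, sub_mul, one_mul, hDR.allOnes_mul_adjMatrix ht,
    hDR.adjMatrix_mul_self ht, T.allOnes_eq]
  simp only [relMatrix]
  module

theorem IsDoublyRegular.relMatrix_mul (c c' : ℤ × ℤ × ℤ) :
    T.relMatrix c * T.relMatrix c' = T.relMatrix (schemeMul t c c') := by
  have hAtAt : T.adjMatrixᵀ * T.adjMatrixᵀ = T.relMatrix (0, t + 1, t) := by
    rw [← transpose_mul, hDR.adjMatrix_mul_self ht, relMatrix_transpose, swapArcs]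
  calc T.relMatrix c * T.relMatrix c'
      = (c.1 * c'.1) • 1 + (c.1 * c'.2.1 + c.2.1 * c'.1) • T.adjMatrix
          + (c.1 * c'.2.2 + c.2.2 * c'.1) • T.adjMatrixᵀ
          + (c.2.1 * c'.2.1) • (T.adjMatrix * T.adjMatrix)
          + (c.2.1 * c'.2.2) • (T.adjMatrix * T.adjMatrixᵀ)
          + (c.2.2 * c'.2.1) • (T.adjMatrixᵀ * T.adjMatrix)
          + (c.2.2 * c'.2.2) • (T.adjMatrixᵀ * T.adjMatrixᵀ) := by
        simp only [relMatrix, add_mul, mul_add, smul_mul_assoc, mul_smul_comm, mul_one, one_mul]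
        module
    _ = T.relMatrix (schemeMul t c c') := by
        rw [hDR.adjMatrix_mul_self ht, hDR.adjMatrix_mul_transpose ht,
          hDR.transpose_mul_adjMatrix ht, hAtAt]
        simp only [relMatrix, schemeMul]
        module

theorem IsDoublyRegular.adjMatrix_pow (m : ℕ) :
    T.adjMatrix ^ m = T.relMatrix (powCoeff t m) := by
  induction m with
  | zero => rw [pow_zero, powCoeff, relMatrix_one]
  | succ m ih =>
    have hA : T.adjMatrix = T.relMatrix (0, 1, 0) := by simp [relMatrix]
    rw [pow_succ, ih, powCoeff, ← hDR.relMatrix_mul ht, ← hA]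

theorem IsDoublyRegular.pow_mul_relMatrix_mul_pow_apply {i j : V} (h : T.r j i) (c : ℤ × ℤ × ℤ)
    (m n : ℕ) :
    (T.adjMatrix ^ m * T.relMatrix c * T.adjMatrix ^ n) i j =
      (schemeMul t c (powCoeff t (m + n))).2.2 := by
  rw [← T.relMatrix_apply_of_r h, ← hDR.relMatrix_mul ht, ← hDR.adjMatrix_pow ht, pow_add,
    ← mul_assoc, hDR.adjMatrix_pow ht m, hDR.relMatrix_mul ht, hDR.relMatrix_mul ht,
    schemeMul_comm]

end DoublyRegular

theorem powCoeff_zero (t : ℤ) : powCoeff t 0 = (1, 0, 0) := rfl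

theorem powCoeff_one (t : ℤ) : powCoeff t 1 = (0, 1, 0) := by
  simp [powCoeff, schemeMul]

theorem powCoeff_two (t : ℤ) : powCoeff t 2 = (0, t, t + 1) := by
  rw [powCoeff_succ, powCoeff_one]
  simp only [schemeMul, Prod.mk.injEq]
  refine ⟨?_, ?_, ?_⟩ <;> ring

theorem powCoeff_three (t : ℤ) : powCoeff t 3 =
    (2 * t ^ 2 + 3 * t + 1,
      2 * t ^ 2 + t,
      2 * t ^ 2 + 2 * t) := by
  rw [powCoeff_succ, powCoeff_two]
  simp only [schemeMul, Prod.mk.injEq]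
  refine ⟨?_, ?_, ?_⟩ <;> ring

theorem powCoeff_four (t : ℤ) : powCoeff t 4 =
    (4 * t ^ 3 + 6 * t ^ 2 + 2 * t,
      4 * t ^ 3 + 5 * t ^ 2 + 3 * t + 1,
      4 * t ^ 3 + 5 * t ^ 2 + t) := by
  rw [powCoeff_succ, powCoeff_three]
  simp only [schemeMul, Prod.mk.injEq]
  refine ⟨?_, ?_, ?_⟩ <;> ring

theorem powCoeff_five (t : ℤ) : powCoeff t 5 =
    (8 * t ^ 4 + 14 * t ^ 3 + 7 * t ^ 2 + t,
      8 * t ^ 4 + 14 * t ^ 3 + 10 * t ^ 2 + 3 * t,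
      8 * t ^ 4 + 14 * t ^ 3 + 9 * t ^ 2 + 4 * t + 1) := by
  rw [powCoeff_succ, powCoeff_four]
  simp only [schemeMul, Prod.mk.injEq]
  refine ⟨?_, ?_, ?_⟩ <;> ring

theorem powCoeff_six (t : ℤ) : powCoeff t 6 =
    (16 * t ^ 5 + 36 * t ^ 4 + 32 * t ^ 3 + 17 * t ^ 2 + 6 * t + 1,
      16 * t ^ 5 + 36 * t ^ 4 + 33 * t ^ 3 + 14 * t ^ 2 + 2 * t,
      16 * t ^ 5 + 36 * t ^ 4 + 33 * t ^ 3 + 17 * t ^ 2 + 4 * t) := by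
  rw [powCoeff_succ, powCoeff_five]
  simp only [schemeMul, Prod.mk.injEq]
  refine ⟨?_, ?_, ?_⟩ <;> ring

theorem powCoeff_seven (t : ℤ) : powCoeff t 7 =
    (32 * t ^ 6 + 88 * t ^ 5 + 102 * t ^ 4 + 67 * t ^ 3 + 25 * t ^ 2 + 4 * t,
      32 * t ^ 6 + 88 * t ^ 5 + 102 * t ^ 4 + 63 * t ^ 3 + 23 * t ^ 2 + 6 * t + 1,
      32 * t ^ 6 + 88 * t ^ 5 + 102 * t ^ 4 + 64 * t ^ 3 + 20 * t ^ 2 + 2 * t) := by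
  rw [powCoeff_succ, powCoeff_six]
  simp only [schemeMul, Prod.mk.injEq]
  refine ⟨?_, ?_, ?_⟩ <;> ring

/-- The number of closed walks of length eight through an arc with a prescribed repeat whose times
are `a` apart, in a doubly-regular tournament of order `4t + 3`. -/
def oneRepeat (t : ℤ) (a : ℕ) : ℤ :=
  (schemeMul t (powCoeff t a * (1, 0, 0)) (powCoeff t (7 - a))).2.2

/-- The number of closed walks of length eight through an arc with two prescribed crossing repeats
whose four times have the successive gaps `a`, `b`, `c`, in a doubly-regular tournament of order
`4t + 3`. -/
def twoRepeats (t : ℤ) (a b c : ℕ) : ℤ :=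
  (schemeMul t (powCoeff t a * swapArcs (powCoeff t b) * powCoeff t c)
    (powCoeff t (7 - (a + b + c)))).2.2

/-- The analogue of `twoRepeats` for three pairwise crossing repeats. -/
def threeRepeats (t : ℤ) (a b c d e : ℕ) : ℤ :=
  (schemeMul t (schemeMul t (powCoeff t a * powCoeff t d) (powCoeff t b * powCoeff t e) *
    swapArcs (powCoeff t c)) (powCoeff t (7 - (a + b + c + d + e)))).2.2

/-- The analogue of `twoRepeats` for four pairwise crossing repeats. -/
def fourRepeats (t : ℤ) (a b c d e f g : ℕ) : ℤ :=
  (schemeMul t (schemeMul t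
    (schemeMul t (powCoeff t a * powCoeff t e) (powCoeff t b * powCoeff t f))
    (powCoeff t c * powCoeff t g) * swapArcs (powCoeff t d)) (powCoeff t
    (7 - (a + b + c + d + e + f + g)))).2.2

theorem sum_oneRepeat (t : ℤ) : ∑ p ∈ range 8, ∑ r ∈ Ioo p 8, oneRepeat t (r - p) =
    96 * t ^ 5 + 256 * t ^ 4 + 232 * t ^ 3 + 80 * t ^ 2 + 8 * t := by
  simp only [sum_range_succ, range_zero, Ioo_ofNat_ofNat, sum_empty, Nat.reduceAdd, sum_insert,
    mem_insert, mem_singleton, Nat.reduceEqDiff, sum_singleton, or_self, not_false_eq_true,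
    Nat.reduceSub, zero_add, add_zero]
  simp only [oneRepeat, powCoeff_zero, powCoeff_one, powCoeff_two, powCoeff_three, powCoeff_four,
    powCoeff_five, powCoeff_six, powCoeff_seven, schemeMul, Nat.reduceSub]
  ring

theorem sum_twoRepeats (t : ℤ) : ∑ p ∈ range 8, ∑ r ∈ Ioo p 8, ∑ q ∈ Ioo p r, ∑ s ∈ Ioo r 8,
    twoRepeats t (q - p) (r - q) (s - r) =
      100 * t ^ 4 + 216 * t ^ 3 + 132 * t ^ 2 + 16 * t := by
  simp only [sum_range_succ, range_zero, Ioo_ofNat_ofNat, sum_empty, Nat.reduceAdd, sum_insert,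
    mem_insert, mem_singleton, Nat.reduceEqDiff, sum_singleton, or_self, not_false_eq_true,
    Nat.reduceSub, zero_add, add_zero]
  simp only [twoRepeats, powCoeff_zero, powCoeff_one, powCoeff_two, powCoeff_three, powCoeff_four,
    powCoeff_five, schemeMul, swapArcs, Prod.mk_mul_mk, Nat.reduceSub, Nat.reduceAdd]
  ring

theorem sum_threeRepeats (t : ℤ) : ∑ a ∈ range 8, ∑ d ∈ Ioo a 8, ∑ b ∈ Ioo a d, ∑ e ∈ Ioo d 8,
    ∑ c ∈ Ioo b d, ∑ f ∈ Ioo e 8, threeRepeats t (b - a) (c - b) (d - c) (e - d) (f - e) =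
      40 * t ^ 3 + 52 * t ^ 2 + 12 * t := by
  simp only [sum_range_succ, range_zero, Ioo_ofNat_ofNat, sum_empty, Nat.reduceAdd, sum_insert,
    mem_insert, mem_singleton, Nat.reduceEqDiff, sum_singleton, or_self, not_false_eq_true,
    Nat.reduceSub, zero_add, add_zero]
  simp only [threeRepeats, powCoeff_zero, powCoeff_one, powCoeff_two, powCoeff_three, schemeMul,
    swapArcs, Nat.reduceSub, Nat.reduceAdd, zero_mul, mul_zero, add_zero, zero_add,
    one_mul, mul_one]
  ring

theorem sum_fourRepeats (t : ℤ) : ∑ a ∈ range 8, ∑ e ∈ Ioo a 8, ∑ b ∈ Ioo a e, ∑ f ∈ Ioo e 8,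
    ∑ c ∈ Ioo b e, ∑ g ∈ Ioo f 8, ∑ d ∈ Ioo c e, ∑ h ∈ Ioo g 8,
      fourRepeats t (b - a) (c - b) (d - c) (e - d) (f - e) (g - f) (h - g) =
        2 * t ^ 2 + 2 * t := by
  simp only [sum_range_succ, range_zero, Ioo_ofNat_ofNat, sum_empty, Nat.reduceAdd, sum_insert,
    mem_insert, mem_singleton, Nat.reduceEqDiff, sum_singleton, or_self, not_false_eq_true,
    Nat.reduceSub, zero_add, add_zero]
  simp only [fourRepeats, powCoeff_zero, powCoeff_one, schemeMul, swapArcs, Nat.reduceSub,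
    Nat.reduceAdd, mul_zero, add_zero, zero_add, mul_one]
  ring

section Walks

variable {n : ℕ} (l : List (ℕ × V)) (x y : V)

/-- The walks of length `n` from `x` to `y` that are at the vertex `u` at time `k` for each pair
`(k, u)` in the list `l`. -/
def pinnedWalks [Fintype V] (n : ℕ) (l : List (ℕ × V)) (x y : V) : Finset (Fin (n + 1) → V) :=
  {v | v 0 = x ∧ v (Fin.last n) = y ∧ (∀ k : Fin n, T.r (v k.castSucc) (v k.succ)) ∧
    ∀ a ∈ l, ∀ k : Fin (n + 1), (k : ℕ) = a.1 → v k = a.2}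

variable [Fintype V]

theorem mem_pinnedWalks {v : Fin (n + 1) → V} :
    v ∈ T.pinnedWalks n l x y ↔
      v 0 = x ∧ v (Fin.last n) = y ∧ (∀ k : Fin n, T.r (v k.castSucc) (v k.succ)) ∧
        ∀ a ∈ l, ∀ k : Fin (n + 1), (k : ℕ) = a.1 → v k = a.2 :=
  mem_filter_univ v

theorem card_pinnedWalks_zero_nil : (#(T.pinnedWalks 0 [] x y) : ℤ) = (1 : Matrix V V ℤ) x y := by
  rw [one_apply]
  split_ifs with h
  · subst h
    rw [Nat.cast_eq_one, card_eq_one]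
    refine ⟨fun _ => x, ?_⟩
    ext v
    simp [mem_pinnedWalks, funext_iff]
  · rw [Nat.cast_eq_zero, card_eq_zero, eq_empty_iff_forall_notMem]
    rintro v hv
    obtain ⟨rfl, rfl, -⟩ := (T.mem_pinnedWalks _ _ _).1 hv
    exact h rfl

theorem snoc_mem_pinnedWalks (hl : ∀ a ∈ l, a.1 ≤ n) {z : V} {v : Fin (n + 1) → V} :
    (Fin.snoc v y : Fin (n + 2) → V) ∈ T.pinnedWalks (n + 1) l x y ∧ v (Fin.last n) = z ↔
      v ∈ T.pinnedWalks n l x z ∧ T.r z y := by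
  have hpin : (∀ a ∈ l, ∀ k : Fin (n + 2), (k : ℕ) = a.1 → (Fin.snoc v y : Fin (n + 2) → V) k = a.2)
      ↔ ∀ a ∈ l, ∀ k : Fin (n + 1), (k : ℕ) = a.1 → v k = a.2 := by
    refine forall₂_congr fun a ha => ?_
    have := hl a ha
    simp only [Fin.forall_fin_succ' (n := n + 1), Fin.val_castSucc, Fin.snoc_castSucc, Fin.val_last]
    exact and_iff_left fun h => by lia
  rw [mem_pinnedWalks, mem_pinnedWalks, hpin, Fin.forall_fin_succ', ← Fin.castSucc_zero]
  simp only [Fin.snoc_castSucc, Fin.snoc_last, Fin.succ_last, ← Fin.castSucc_succ]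
  constructor
  · rintro ⟨⟨h0, -, ⟨h, hr⟩, hp⟩, rfl⟩
    exact ⟨⟨h0, rfl, h, hp⟩, hr⟩
  · rintro ⟨⟨h0, rfl, h, hp⟩, hr⟩
    exact ⟨⟨h0, trivial, ⟨h, hr⟩, hp⟩, rfl⟩

theorem card_pinnedWalks_succ (hl : ∀ a ∈ l, a.1 ≤ n) :
    (#(T.pinnedWalks (n + 1) l x y) : ℤ) =
      ∑ z, (#(T.pinnedWalks n l x z) : ℤ) * T.adjMatrix z y := by
  have hlast {v : Fin (n + 2) → V} (hv : v ∈ T.pinnedWalks (n + 1) l x y) :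
      Fin.snoc (Fin.init v) y = v := by
    rw [← ((T.mem_pinnedWalks _ _ _).1 hv).2.1, Fin.snoc_init_self]
  have hfiber (z : V) : #{v ∈ T.pinnedWalks (n + 1) l x y | v (Fin.last n).castSucc = z} =
      #{_v ∈ T.pinnedWalks n l x z | T.r z y} := by
    refine card_nbij' (i := Fin.init) (j := fun v => Fin.snoc v y) ?_ ?_ ?_ ?_
    · intro v hv
      simp only [coe_filter, Set.mem_ofPred_eq] at hv ⊢
      rw [← T.snoc_mem_pinnedWalks l x y hl, hlast hv.1]
      exact hv
    · intro v hv
      simp only [coe_filter, Set.mem_ofPred_eq, Fin.snoc_castSucc] at hv ⊢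
      exact (T.snoc_mem_pinnedWalks l x y hl).2 hv
    · exact fun v hv => hlast (mem_filter.1 hv).1
    · exact fun v _ => Fin.init_snoc (α := fun _ => V) _ _
  rw [card_eq_sum_card_fiberwise (f := fun v => v (Fin.last n).castSucc) (t := univ)
    (fun _ _ => mem_univ _), Nat.cast_sum]
  refine sum_congr rfl fun z _ => ?_
  rw [hfiber, adjMatrix_apply]
  split_ifs with h <;> simp [h]

theorem card_pinnedWalks_nil (n : ℕ) : (#(T.pinnedWalks n [] x y) : ℤ) = (T.adjMatrix ^ n) x y := by
  induction n generalizing y with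
  | zero => rw [card_pinnedWalks_zero_nil, pow_zero]
  | succ n ih => simp only [pow_succ, mul_apply, ← ih, card_pinnedWalks_succ, List.not_mem_nil,
      IsEmpty.forall_iff, implies_true]

theorem card_pinnedWalks_cons_last (u : V) :
    #(T.pinnedWalks n ((n, u) :: l) x y) = if y = u then #(T.pinnedWalks n l x u) else 0 := by
  have hmem (v : Fin (n + 1) → V) : v ∈ T.pinnedWalks n ((n, u) :: l) x y ↔
      v ∈ T.pinnedWalks n l x y ∧ y = u := by
    simp only [mem_pinnedWalks, List.forall_mem_cons]
    have hn : (∀ k : Fin (n + 1), (k : ℕ) = n → v k = u) ↔ v (Fin.last n) = u :=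
      ⟨fun h => h _ rfl, fun h k hk => by rwa [Fin.ext hk (b := Fin.last n)]⟩
    rw [hn]
    constructor
    · rintro ⟨h0, rfl, h, rfl, hl⟩
      exact ⟨⟨h0, rfl, h, hl⟩, rfl⟩
    · rintro ⟨⟨h0, rfl, h, hl⟩, rfl⟩
      exact ⟨h0, rfl, h, rfl, hl⟩
  split_ifs with h
  · subst h
    exact congr_arg card (Finset.ext fun v => (hmem v).trans (and_iff_left rfl))
  · exact card_eq_zero.2 (eq_empty_of_forall_notMem fun v hv => h ((hmem v).1 hv).2)

variable {l x y} in
theorem card_pinnedWalks_cons {c : ℕ} (hcn : c ≤ n) (hl : ∀ a ∈ l, a.1 ≤ c) (u : V) :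
    (#(T.pinnedWalks n ((c, u) :: l) x y) : ℤ) =
      #(T.pinnedWalks c l x u) * (T.adjMatrix ^ (n - c)) u y := by
  induction n, hcn using Nat.le_induction generalizing y with
  | base => simp [card_pinnedWalks_cons_last, one_apply, eq_comm]
  | succ n hcn ih =>
    have hl' : ∀ a ∈ (c, u) :: l, a.1 ≤ n :=
      List.forall_mem_cons.2 ⟨hcn, fun a ha => (hl a ha).trans hcn⟩
    rw [card_pinnedWalks_succ _ _ _ _ hl', Nat.sub_add_comm hcn, pow_succ, mul_apply, mul_sum]
    simp only [ih, mul_assoc]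

theorem pinnedWalks_eq_filter (hl : ∀ a ∈ l, a.1 ≤ n) :
    T.pinnedWalks n l x y =
      {v ∈ T.pinnedWalks n [] x y | ∀ a ∈ l, cyclicExtension v a.1 = a.2} := by
  ext v
  have hpin : (∀ a ∈ l, ∀ k : Fin (n + 1), (k : ℕ) = a.1 → v k = a.2) ↔
      ∀ a ∈ l, cyclicExtension v a.1 = a.2 := by
    refine forall₂_congr fun a ha => ?_
    have ha' : (Fin.ofNat (n + 1) a.1 : ℕ) = a.1 := Nat.mod_eq_of_lt (Nat.lt_succ_of_le (hl a ha))
    exact ⟨fun h => h _ ha', fun h k hk => by rwa [Fin.ext (hk.trans ha'.symm)]⟩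
  simp only [mem_filter, mem_pinnedWalks, hpin, List.not_mem_nil, IsEmpty.forall_iff, implies_true,
    and_true, and_assoc]

/-- The walks of length `n` from `x` to `y` that are at the same vertex at the times `p` and `r`
for each pair `(p, r)` in the list `l`. -/
def repeatingWalks (n : ℕ) (l : List (ℕ × ℕ)) (x y : V) : Finset (Fin (n + 1) → V) :=
  {v ∈ T.pinnedWalks n [] x y | ∀ a ∈ l, cyclicExtension v a.1 = cyclicExtension v a.2}

theorem repeatingWalks_nil (n : ℕ) : T.repeatingWalks n [] x y = T.pinnedWalks n [] x y := by
  simp [repeatingWalks]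

theorem card_repeatingWalks_one {p r : ℕ} (hpr : p ≤ r) (hr : r ≤ n) :
    (#(T.repeatingWalks n [(p, r)] x y) : ℤ) =
      (T.adjMatrix ^ p * ((T.adjMatrix ^ (r - p)) ⊙ 1) * T.adjMatrix ^ (n - r)) x y := by
  have hpin (P : V) := T.pinnedWalks_eq_filter (n := n) [(r, P), (p, P)] x y (by simp; lia)
  have hsplit : #(T.repeatingWalks n [(p, r)] x y) =
      ∑ P, #(T.pinnedWalks n [(r, P), (p, P)] x y) := by
    simp only [hpin, repeatingWalks, card_filter, List.forall_mem_cons]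
    rw [sum_comm]
    simp [ite_and, eq_comm]
  rw [hsplit, Nat.cast_sum]
  simp only [mul_apply, hadamard_apply, one_apply, mul_ite, mul_one, mul_zero, sum_ite_eq',
    mem_univ, if_true]
  refine sum_congr rfl fun P _ => ?_
  rw [card_pinnedWalks_cons _ hr (by grind), card_pinnedWalks_cons _ hpr (by grind),
    card_pinnedWalks_nil]

theorem card_repeatingWalks_two {p q r s : ℕ} (hpq : p ≤ q) (hqr : q ≤ r) (hrs : r ≤ s)
    (hs : s ≤ n) :
    (#(T.repeatingWalks n [(q, s), (p, r)] x y) : ℤ) =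
      (T.adjMatrix ^ p * ((T.adjMatrix ^ (q - p)) ⊙ (T.adjMatrix ^ (r - q))ᵀ ⊙
        (T.adjMatrix ^ (s - r))) * T.adjMatrix ^ (n - s)) x y := by
  have hpin (P Q : V) := T.pinnedWalks_eq_filter (n := n)
    [(s, Q), (r, P), (q, Q), (p, P)] x y (by simp; lia)
  have hsplit : #(T.repeatingWalks n [(q, s), (p, r)] x y) =
      ∑ Q, ∑ P, #(T.pinnedWalks n [(s, Q), (r, P), (q, Q), (p, P)] x y) := by
    simp only [hpin, repeatingWalks, card_filter, List.forall_mem_cons]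
    simp only [sum_comm (s := univ) (t := T.pinnedWalks n [] x y)]
    simp [ite_and, eq_comm]
  rw [hsplit]
  push_cast
  simp only [mul_apply, hadamard_apply, transpose_apply, sum_mul]
  refine sum_congr rfl fun Q _ => sum_congr rfl fun P _ => ?_
  rw [card_pinnedWalks_cons _ hs (by grind), card_pinnedWalks_cons _ hrs (by grind),
    card_pinnedWalks_cons _ hqr (by grind), card_pinnedWalks_cons _ hpq (by grind),
    card_pinnedWalks_nil]
  ring

theorem card_repeatingWalks_three {a b c d e f : ℕ} (hab : a ≤ b) (hbc : b ≤ c) (hcd : c ≤ d)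
    (hde : d ≤ e) (hef : e ≤ f) (hf : f ≤ n) :
    (#(T.repeatingWalks n [(c, f), (b, e), (a, d)] x y) : ℤ) =
      (T.adjMatrix ^ a * ((((T.adjMatrix ^ (b - a)) ⊙ (T.adjMatrix ^ (e - d))) *
        ((T.adjMatrix ^ (c - b)) ⊙ (T.adjMatrix ^ (f - e)))) ⊙ (T.adjMatrix ^ (d - c))ᵀ) *
        T.adjMatrix ^ (n - f)) x y := by
  have hpin (P Q R : V) := T.pinnedWalks_eq_filter (n := n)
    [(f, R), (e, Q), (d, P), (c, R), (b, Q), (a, P)] x y (by simp; lia)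
  have hsplit : #(T.repeatingWalks n [(c, f), (b, e), (a, d)] x y) =
      ∑ R, ∑ P, ∑ Q, #(T.pinnedWalks n [(f, R), (e, Q), (d, P), (c, R), (b, Q), (a, P)] x y) := by
    simp only [hpin, repeatingWalks, card_filter, List.forall_mem_cons]
    simp only [sum_comm (s := univ) (t := T.pinnedWalks n [] x y)]
    simp [ite_and, eq_comm]
  rw [hsplit]
  push_cast
  simp only [mul_apply, hadamard_apply, transpose_apply, sum_mul, mul_sum]
  refine sum_congr rfl fun R _ => sum_congr rfl fun P _ => sum_congr rfl fun Q _ => ?_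
  rw [card_pinnedWalks_cons _ hf (by grind), card_pinnedWalks_cons _ hef (by grind),
    card_pinnedWalks_cons _ hde (by grind), card_pinnedWalks_cons _ hcd (by grind),
    card_pinnedWalks_cons _ hbc (by grind), card_pinnedWalks_cons _ hab (by grind),
    card_pinnedWalks_nil]
  ring

theorem card_repeatingWalks_four {a b c d e f g h : ℕ} (hab : a ≤ b) (hbc : b ≤ c) (hcd : c ≤ d)
    (hde : d ≤ e) (hef : e ≤ f) (hfg : f ≤ g) (hgh : g ≤ h) (hh : h ≤ n) :
    (#(T.repeatingWalks n [(d, h), (c, g), (b, f), (a, e)] x y) : ℤ) =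
      (T.adjMatrix ^ a * ((((T.adjMatrix ^ (b - a)) ⊙ (T.adjMatrix ^ (f - e))) *
        ((T.adjMatrix ^ (c - b)) ⊙ (T.adjMatrix ^ (g - f))) *
        ((T.adjMatrix ^ (d - c)) ⊙ (T.adjMatrix ^ (h - g)))) ⊙ (T.adjMatrix ^ (e - d))ᵀ) *
        T.adjMatrix ^ (n - h)) x y := by
  have hpin (P Q R S : V) := T.pinnedWalks_eq_filter (n := n)
    [(h, S), (g, R), (f, Q), (e, P), (d, S), (c, R), (b, Q), (a, P)] x y (by simp; lia)
  have hsplit : #(T.repeatingWalks n [(d, h), (c, g), (b, f), (a, e)] x y) =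
      ∑ S, ∑ P, ∑ R, ∑ Q, #(T.pinnedWalks n
        [(h, S), (g, R), (f, Q), (e, P), (d, S), (c, R), (b, Q), (a, P)] x y) := by
    simp only [hpin, repeatingWalks, card_filter, List.forall_mem_cons]
    simp only [sum_comm (s := univ) (t := T.pinnedWalks n [] x y)]
    simp [ite_and, eq_comm]
  rw [hsplit]
  push_cast
  simp only [mul_apply, hadamard_apply, transpose_apply, sum_mul, mul_sum]
  refine sum_congr rfl fun S _ => sum_congr rfl fun P _ => sum_congr rfl fun R _ =>
    sum_congr rfl fun Q _ => ?_
  rw [card_pinnedWalks_cons _ hh (by grind), card_pinnedWalks_cons _ hgh (by grind),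
    card_pinnedWalks_cons _ hfg (by grind), card_pinnedWalks_cons _ hef (by grind),
    card_pinnedWalks_cons _ hde (by grind), card_pinnedWalks_cons _ hcd (by grind),
    card_pinnedWalks_cons _ hbc (by grind), card_pinnedWalks_cons _ hab (by grind),
    card_pinnedWalks_nil]
  ring

theorem r_cyclicExtension {i j : V} (h : T.r j i) {v : Fin (n + 1) → V}
    (hv : v ∈ T.pinnedWalks n [] i j) (k : ℕ) :
    T.r (cyclicExtension v k) (cyclicExtension v (k + 1)) := by
  obtain ⟨rfl, rfl, hv, -⟩ := (T.mem_pinnedWalks _ _ _).1 hv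
  have hsucc : Fin.ofNat (n + 1) (k + 1) = Fin.ofNat (n + 1) k + 1 := by
    ext; simp [Fin.val_add]
  rw [cyclicExtension, cyclicExtension, hsucc]
  rcases Fin.eq_castSucc_or_eq_last (Fin.ofNat (n + 1) k) with ⟨m, hm⟩ | hm
  · rw [hm, Fin.coeSucc_eq_succ]
    exact hv m
  · rwa [hm, Fin.last_add_one]

end Walks

section InclusionExclusion

variable [Fintype V] {n : ℕ} (x y : V)

/-- The members of `repeatingWalks n l x y` whose vertices at the times `a, a + 1, …, n` are
distinct. -/
def simpleFromWalks (n : ℕ) (l : List (ℕ × ℕ)) (a : ℕ) (x y : V) : Finset (Fin (n + 1) → V) :=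
  {v ∈ T.repeatingWalks n l x y | Set.InjOn (cyclicExtension v) (Ico a (n + 1))}

theorem mem_simpleFromWalks_nil_zero {v : Fin (n + 1) → V} :
    v ∈ T.simpleFromWalks n [] 0 x y ↔ Function.Injective v ∧ v 0 = x ∧ v (Fin.last n) = y ∧
      ∀ k : Fin n, T.r (v k.castSucc) (v k.succ) := by
  rw [simpleFromWalks, mem_filter, repeatingWalks_nil, mem_pinnedWalks, injOn_cyclicExtension_iff]
  simp [and_comm]

theorem mem_repeatingWalks_cons {q s : ℕ} {l : List (ℕ × ℕ)} {v : Fin (n + 1) → V} :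
    v ∈ T.repeatingWalks n ((q, s) :: l) x y ↔
      cyclicExtension v q = cyclicExtension v s ∧ v ∈ T.repeatingWalks n l x y := by
  simp only [repeatingWalks, mem_filter, List.forall_mem_cons]
  tauto

theorem card_simpleFromWalks_eq_sub_sum (l : List (ℕ × ℕ)) {a : ℕ} (ha : a ≤ n) :
    (#(T.simpleFromWalks n l a x y) : ℤ) = #(T.simpleFromWalks n l (a + 1) x y) -
      ∑ s ∈ Ioo a (n + 1), (#(T.simpleFromWalks n ((a, s) :: l) (a + 1) x y) : ℤ) := by
  have hIco : Ico a (n + 1) = insert a (Ico (a + 1) (n + 1)) :=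
    (insert_Ico_add_one_left_eq_Ico (Nat.lt_succ_of_le ha)).symm
  have hIoo : Ioo a (n + 1) = Ico (a + 1) (n + 1) := (Ico_add_one_left_eq_Ioo a (n + 1)).symm
  have hfirst : T.simpleFromWalks n l a x y = {v ∈ T.simpleFromWalks n l (a + 1) x y |
      ∀ s ∈ Ioo a (n + 1), cyclicExtension v a ≠ cyclicExtension v s} := by
    ext v
    simp only [simpleFromWalks, hIoo, hIco, coe_insert, mem_filter, and_assoc,
      Set.injOn_insert (show a ∉ (↑(Ico (a + 1) (n + 1)) : Set ℕ) by simp), Set.mem_image, mem_coe]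
    push Not
    simp only [ne_comm]
  have hrest : {v ∈ T.simpleFromWalks n l (a + 1) x y |
      ¬ ∀ s ∈ Ioo a (n + 1), cyclicExtension v a ≠ cyclicExtension v s} =
      (Ioo a (n + 1)).biUnion fun s => T.simpleFromWalks n ((a, s) :: l) (a + 1) x y := by
    ext v
    simp only [simpleFromWalks, mem_filter, mem_biUnion, mem_repeatingWalks_cons]
    push Not
    tauto
  have hdisj : Set.PairwiseDisjoint (Ioo a (n + 1))
      fun s => T.simpleFromWalks n ((a, s) :: l) (a + 1) x y := by
    intro s hs s' hs' hss'
    rw [Function.onFun, disjoint_left]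
    intro v hv hv'
    simp only [simpleFromWalks, mem_filter, mem_repeatingWalks_cons] at hv hv'
    rw [hIoo] at hs hs'
    exact hss' (hv.2 hs hs' (hv.1.1.symm.trans hv'.1.1))
  rw [hfirst, eq_sub_iff_add_eq, ← Nat.cast_sum, ← card_biUnion hdisj, ← hrest, ← Nat.cast_add,
    card_filter_add_card_filter_not]

/-- Walks are sorted by their last repeat. -/
theorem card_simpleFromWalks (l : List (ℕ × ℕ)) {a : ℕ} (ha : a ≤ n + 1) :
    (#(T.simpleFromWalks n l a x y) : ℤ) = #(T.repeatingWalks n l x y) -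
      ∑ q ∈ Ico a (n + 1), ∑ s ∈ Ioo q (n + 1),
        (#(T.simpleFromWalks n ((q, s) :: l) (q + 1) x y) : ℤ) := by
  induction ha using Nat.decreasingInduction with
  | self => simp [simpleFromWalks]
  | of_succ a ha ih =>
    rw [card_simpleFromWalks_eq_sub_sum _ _ _ _ (Nat.lt_succ_iff.1 ha), ih,
      sum_eq_sum_Ico_succ_bot ha]
    ring

theorem repeatingWalks_eq_empty {l : List (ℕ × ℕ)} {i j : V} (h : T.r j i) {p r q s : ℕ}
    (hl : (p, r) ∈ l) (hpr : p < r) (hr : r < 8) (hpq : p < q) (hqs : q < s) (hs : s < 8)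
    (hcross : ¬ (q < r ∧ r < s)) : T.repeatingWalks 7 ((q, s) :: l) i j = ∅ := by
  refine eq_empty_of_forall_notMem fun v hv => hcross ?_
  rw [mem_repeatingWalks_cons, repeatingWalks, mem_filter] at hv
  exact repeats_cross (T.r_cyclicExtension h hv.2.1) (periodic_cyclicExtension v) hpr hr hqs hs
    (hv.2.2 _ hl) hv.1 hpq

theorem card_simpleFromWalks_cons {l : List (ℕ × ℕ)} {i j : V} (h : T.r j i)
    {p r q s : ℕ} (hl : (p, r) ∈ (q, s) :: l) (hpq : p ≤ q) (hqr : q < r) (hrs : r ≤ s)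
    (hs : s < 8) :
    (#(T.simpleFromWalks 7 ((q, s) :: l) (q + 1) i j) : ℤ) =
      #(T.repeatingWalks 7 ((q, s) :: l) i j) - ∑ q' ∈ Ioo q r, ∑ s' ∈ Ioo s 8,
        (#(T.simpleFromWalks 7 ((q', s') :: (q, s) :: l) (q' + 1) i j) : ℤ) := by
  have hzero {q' s' : ℕ} (hq' : q < q') (hqs' : q' < s') (hs' : s' < 8)
      (hcross : ¬ (q' < r ∧ s < s')) :
      (#(T.simpleFromWalks 7 ((q', s') :: (q, s) :: l) (q' + 1) i j) : ℤ) = 0 := by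
    have hempty : T.repeatingWalks 7 ((q', s') :: (q, s) :: l) i j = ∅ := by
      by_cases hqr' : q' < r
      · exact T.repeatingWalks_eq_empty h List.mem_cons_self (by lia) hs hq' hqs' hs' (by tauto)
      · exact T.repeatingWalks_eq_empty h hl (by lia) (by lia) (by lia) hqs' hs' (by tauto)
    rw [simpleFromWalks, hempty, filter_empty, card_empty, Nat.cast_zero]
  rw [card_simpleFromWalks _ _ _ _ (by lia)]
  congr 1
  symm
  refine (sum_congr rfl fun q' hq' => ?_).trans (sum_subset ?_ ?_)
  · rw [mem_Ioo] at hq'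
    refine sum_subset (Ioo_subset_Ioo_left (by lia)) fun s' hs' hs'' => ?_
    simp only [mem_Ioo] at hs' hs''
    exact hzero hq'.1 hs'.1 hs'.2 (by lia)
  · intro q' hq'
    simp only [mem_Ioo, mem_Ico] at hq' ⊢
    lia
  · intro q' hq' hq''
    refine sum_eq_zero fun s' hs' => ?_
    simp only [mem_Ioo, mem_Ico] at hq' hq'' hs'
    exact hzero hq'.1 hs'.1 hs'.2 (by lia)

theorem card_simpleFromWalks_seven {i j : V} (h : T.r j i) :
    (#(T.simpleFromWalks 7 [] 0 i j) : ℤ) =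
      #(T.repeatingWalks 7 [] i j) - ∑ a ∈ range 8, ∑ e ∈ Ioo a 8,
        (#(T.repeatingWalks 7 [(a, e)] i j) - ∑ b ∈ Ioo a e, ∑ f ∈ Ioo e 8,
          (#(T.repeatingWalks 7 [(b, f), (a, e)] i j) - ∑ c ∈ Ioo b e, ∑ g ∈ Ioo f 8,
            (#(T.repeatingWalks 7 [(c, g), (b, f), (a, e)] i j) - ∑ d ∈ Ioo c e, ∑ k ∈ Ioo g 8,
              (#(T.repeatingWalks 7 [(d, k), (c, g), (b, f), (a, e)] i j) : ℤ)))) := by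
  rw [card_simpleFromWalks _ _ _ _ (Nat.zero_le _), ← range_eq_Ico]
  refine congr_arg _ (sum_congr rfl fun a _ => sum_congr rfl fun e he => ?_)
  rw [mem_Ioo] at he
  rw [T.card_simpleFromWalks_cons h (p := a) (r := e) (by simp) le_rfl he.1 le_rfl he.2]
  refine congr_arg _ (sum_congr rfl fun b hb => sum_congr rfl fun f hf => ?_)
  rw [mem_Ioo] at hb hf
  rw [T.card_simpleFromWalks_cons h (p := a) (r := e) (by simp) (by lia) hb.2 (by lia) hf.2]
  refine congr_arg _ (sum_congr rfl fun c hc => sum_congr rfl fun g hg => ?_)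
  rw [mem_Ioo] at hc hg
  rw [T.card_simpleFromWalks_cons h (p := a) (r := e) (by simp) (by lia) hc.2 (by lia) hg.2]
  refine congr_arg _ (sum_congr rfl fun d hd => sum_congr rfl fun k hk => ?_)
  rw [mem_Ioo] at hd hk
  rw [T.card_simpleFromWalks_cons h (p := a) (r := e) (by simp) (by lia) hd.2 (by lia) hk.2,
    sub_eq_self]
  -- A fifth repeat would bring the number of distinct times to ten.
  refine sum_eq_zero fun d' hd' => sum_eq_zero fun k' hk' => ?_
  rw [mem_Ioo] at hd' hk'
  lia

end InclusionExclusion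

section DoublyRegularCounts

variable [Fintype V] {T} {t : ℕ} (hDR : T.IsDoublyRegular t) [Nontrivial V] (ht : t ≠ 0)
  {i j : V} (h : T.r j i)

include hDR ht h

theorem IsDoublyRegular.card_repeatingWalks_nil :
    (#(T.repeatingWalks 7 [] i j) : ℤ) = (powCoeff t 7).2.2 := by
  rw [repeatingWalks_nil, card_pinnedWalks_nil, hDR.adjMatrix_pow ht, T.relMatrix_apply_of_r h]

theorem IsDoublyRegular.card_repeatingWalks_one {p r : ℕ} (hpr : p ≤ r) (hr : r < 8) :
    (#(T.repeatingWalks 7 [(p, r)] i j) : ℤ) = oneRepeat t (r - p) := by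
  rw [T.card_repeatingWalks_one i j hpr (by lia), hDR.adjMatrix_pow ht (r - p), ← T.relMatrix_one,
    relMatrix_hadamard, hDR.pow_mul_relMatrix_mul_pow_apply ht h, oneRepeat,
    show p + (7 - r) = 7 - (r - p) by lia]

theorem IsDoublyRegular.card_repeatingWalks_two {p q r s : ℕ} (hpq : p ≤ q) (hqr : q ≤ r)
    (hrs : r ≤ s) (hs : s < 8) :
    (#(T.repeatingWalks 7 [(q, s), (p, r)] i j) : ℤ) = twoRepeats t (q - p) (r - q) (s - r) := by
  rw [T.card_repeatingWalks_two i j hpq hqr hrs (by lia), hDR.adjMatrix_pow ht (q - p),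
    hDR.adjMatrix_pow ht (r - q), hDR.adjMatrix_pow ht (s - r), relMatrix_transpose,
    relMatrix_hadamard, relMatrix_hadamard, hDR.pow_mul_relMatrix_mul_pow_apply ht h, twoRepeats,
    show p + (7 - s) = 7 - (q - p + (r - q) + (s - r)) by lia]

theorem IsDoublyRegular.card_repeatingWalks_three {a b c d e f : ℕ} (hab : a ≤ b) (hbc : b ≤ c)
    (hcd : c ≤ d) (hde : d ≤ e) (hef : e ≤ f) (hf : f < 8) :
    (#(T.repeatingWalks 7 [(c, f), (b, e), (a, d)] i j) : ℤ) =
      threeRepeats t (b - a) (c - b) (d - c) (e - d) (f - e) := by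
  rw [T.card_repeatingWalks_three i j hab hbc hcd hde hef (by lia), hDR.adjMatrix_pow ht (b - a),
    hDR.adjMatrix_pow ht (c - b), hDR.adjMatrix_pow ht (d - c), hDR.adjMatrix_pow ht (e - d),
    hDR.adjMatrix_pow ht (f - e), relMatrix_transpose, relMatrix_hadamard, relMatrix_hadamard,
    hDR.relMatrix_mul ht, relMatrix_hadamard, hDR.pow_mul_relMatrix_mul_pow_apply ht h,
    threeRepeats, show a + (7 - f) = 7 - (b - a + (c - b) + (d - c) + (e - d) + (f - e)) by lia]

theorem IsDoublyRegular.card_repeatingWalks_four {a b c d e f g k : ℕ} (hab : a ≤ b) (hbc : b ≤ c)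
    (hcd : c ≤ d) (hde : d ≤ e) (hef : e ≤ f) (hfg : f ≤ g) (hgk : g ≤ k) (hk : k < 8) :
    (#(T.repeatingWalks 7 [(d, k), (c, g), (b, f), (a, e)] i j) : ℤ) =
      fourRepeats t (b - a) (c - b) (d - c) (e - d) (f - e) (g - f) (k - g) := by
  rw [T.card_repeatingWalks_four i j hab hbc hcd hde hef hfg hgk (by lia)]
  rw [hDR.adjMatrix_pow ht (b - a), hDR.adjMatrix_pow ht (c - b), hDR.adjMatrix_pow ht (d - c),
    hDR.adjMatrix_pow ht (e - d), hDR.adjMatrix_pow ht (f - e), hDR.adjMatrix_pow ht (g - f),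
    hDR.adjMatrix_pow ht (k - g)]
  rw [relMatrix_transpose, relMatrix_hadamard, relMatrix_hadamard, relMatrix_hadamard,
    hDR.relMatrix_mul ht, hDR.relMatrix_mul ht, relMatrix_hadamard,
    hDR.pow_mul_relMatrix_mul_pow_apply ht h, fourRepeats, show a + (7 - k) =
      7 - (b - a + (c - b) + (d - c) + (e - d) + (f - e) + (g - f) + (k - g)) by lia]

theorem IsDoublyRegular.card_simpleFromWalks_seven :
    (#(T.simpleFromWalks 7 [] 0 i j) : ℤ) =
      2 * (t + 1) * (t - 1) * t ^ 2 * (16 * t ^ 2 - 4 * t - 11) := by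
  have hrepeats : (#(T.simpleFromWalks 7 [] 0 i j) : ℤ) =
      (powCoeff t 7).2.2 - ∑ a ∈ range 8, ∑ e ∈ Ioo a 8,
        (oneRepeat t (e - a) - ∑ b ∈ Ioo a e, ∑ f ∈ Ioo e 8,
          (twoRepeats t (b - a) (e - b) (f - e) - ∑ c ∈ Ioo b e, ∑ g ∈ Ioo f 8,
            (threeRepeats t (b - a) (c - b) (e - c) (f - e) (g - f) -
              ∑ d ∈ Ioo c e, ∑ k ∈ Ioo g 8,
                fourRepeats t (b - a) (c - b) (d - c) (e - d) (f - e) (g - f) (k - g)))) := by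
    rw [T.card_simpleFromWalks_seven h, hDR.card_repeatingWalks_nil ht h]
    refine congr_arg _ (sum_congr rfl fun a _ => sum_congr rfl fun e he => ?_)
    rw [mem_Ioo] at he
    refine congr_arg₂ _ (hDR.card_repeatingWalks_one ht h he.1.le he.2)
      (sum_congr rfl fun b hb => sum_congr rfl fun f hf => ?_)
    rw [mem_Ioo] at hb hf
    refine congr_arg₂ _ (hDR.card_repeatingWalks_two ht h hb.1.le hb.2.le hf.1.le hf.2)
      (sum_congr rfl fun c hc => sum_congr rfl fun g hg => ?_)
    rw [mem_Ioo] at hc hg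
    refine congr_arg₂ _ (hDR.card_repeatingWalks_three ht h hb.1.le hc.1.le hc.2.le hf.1.le
      hg.1.le hg.2)
      (sum_congr rfl fun d hd => sum_congr rfl fun k hk => ?_)
    rw [mem_Ioo] at hd hk
    exact hDR.card_repeatingWalks_four ht h hb.1.le hc.1.le hd.1.le hd.2.le hf.1.le hg.1.le
      hk.1.le hk.2
  simp only [hrepeats, sum_sub_distrib, sum_oneRepeat, sum_twoRepeats, sum_threeRepeats,
    sum_fourRepeats, powCoeff_seven]
  ring

end DoublyRegularCounts

end Tournament

theorem eight_cycles_through_arc_of_doubly_regular_general {V : Type*} [Finite V] {t : ℕ}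
    {T : Tournament V} (hDR : T.IsDoublyRegular t) {i j : V} (harc : T.r j i) :
    (Nat.card {v : Fin 8 → V // Function.Injective v ∧ v 0 = i ∧ v 7 = j ∧
        ∀ k : Fin 7, T.r (v k.castSucc) (v k.succ)} : ℤ) =
      2 * (t + 1) * (t - 1) * t ^ 2 * (16 * t ^ 2 - 4 * t - 11) := by
  classical
  have := Fintype.ofFinite V
  rcases eq_or_ne t 0 with rfl | ht
  · have : IsEmpty {v : Fin 8 → V // Function.Injective v ∧ v 0 = i ∧ v 7 = j ∧
        ∀ k : Fin 7, T.r (v k.castSucc) (v k.succ)} := by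
      refine ⟨fun v => ?_⟩
      have hle := Fintype.card_le_of_injective v.1 v.2.1
      have := hDR.card_le_three
      rw [Fintype.card_fin] at hle
      lia
    simp
  · have : Nontrivial V := ⟨j, i, T.ne_of_r harc⟩
    rw [← hDR.card_simpleFromWalks_seven ht harc]
    exact congr_arg _ (Nat.subtype_card _ fun v => T.mem_simpleFromWalks_nil_zero i j)

theorem eight_cycles_through_arc_of_doubly_regular
    (t : ℕ) (T : Tournament (Fin (4 * t + 3)))
    (hDR : T.IsDoublyRegular t)
    (i j : Fin (4 * t + 3)) (harc : T.r j i) :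
    -- the 8-cycles through the arc (j,i) correspond bijectively to the
    -- paths of length 7 from i to j
    (Nat.card {v : Fin 8 → Fin (4 * t + 3) //
        Function.Injective v ∧ v 0 = i ∧ v 7 = j ∧
        ∀ k : Fin 7, T.r (v k.castSucc) (v k.succ)} : ℤ)
      = 2 * ((t : ℤ) + 1) * ((t : ℤ) - 1) * (t : ℤ) ^ 2 *
          (16 * (t : ℤ) ^ 2 - 4 * (t : ℤ) - 11) :=
  eight_cycles_through_arc_of_doubly_regular_general hDR harc
end

section
/- Any two doubly-regular tournaments of the same order n ≡ 3 mod 4 have the same number of 8-cycles. -/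
/-- The number of directed `m`-cycles of the relation `r`: each `m`-cycle corresponds
to exactly `m` injective cyclic sequences (one for each rotation). -/
noncomputable def numCycles {V : Type*} (r : V → V → Prop) (m : ℕ) : ℕ :=
  Nat.card {γ : ZMod m → V // Function.Injective γ ∧ ∀ k, r (γ k) (γ (k + 1))} / m

/-! Deletion–contraction reduces counting injective maps of the cycle to counting all homomorphisms
from its contractions, which are balanced multidigraphs with at most eight arcs. The arc relation of
a doubly regular tournament generates an association scheme whose intersection numbers depend only
on `t`, so a vertex of the pattern with at most two neighbors can be summed out, at the price of a
weight on the pair of its neighbors. This never gets stuck unless four vertices all have at least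
three neighbors, which is impossible for a balanced multidigraph with at most eight arcs and no
loops or 2-cycles. -/

open Finset

/-! ### Sums over injective assignments -/

theorem injective_iff_forall_mem_offDiag {ι V : Type*} [Fintype ι] {x : ι → V} :
    Function.Injective x ↔ ∀ p ∈ (univ : Finset ι).offDiag, x p.1 ≠ x p.2 := by
  simp only [mem_offDiag, mem_univ, true_and, Prod.forall]
  exact ⟨fun hx a b => hx.ne, fun hx a b hab => not_imp_not.1 (hx a b) hab⟩

section SumsOverAssignments

variable {V V₁ V₂ ι M : Type*} [Fintype ι] [DecidableEq ι] [Fintype V] [Fintype V₁] [Fintype V₂]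

theorem sum_sum_update [AddCommMonoid M] (v : ι) (F : (ι → V) → M) :
    ∑ x, ∑ y, F (Function.update x v y) = Fintype.card V • ∑ x, F x := by
  have hswap : Function.Involutive
      fun p : (ι → V) × V => (Function.update p.1 v p.2, p.1 v) := fun p => by simp
  calc ∑ x, ∑ y, F (Function.update x v y)
      = ∑ p : (ι → V) × V, F (hswap.toPerm _ p).1 :=
        (Fintype.sum_prod_type' fun x y => F (Function.update x v y)).symm
    _ = ∑ p : (ι → V) × V, F p.1 := Equiv.sum_comp (hswap.toPerm _) fun p => F p.1
    _ = Fintype.card V • ∑ x, F x := by simp [Fintype.sum_prod_type, sum_nsmul]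

theorem card_nsmul_sum_filter_eq [DecidableEq V] [AddCommMonoid M] {u v : ι} (huv : u ≠ v)
    (F : (ι → V) → M) :
    Fintype.card V • ∑ x with x u = x v, F x = ∑ x, F (x ∘ Function.update id u v) := by
  rw [sum_filter, ← sum_sum_update u]
  refine sum_congr rfl fun x _ => ?_
  simp [Function.update_of_ne huv.symm, Function.comp_update]

theorem sum_filter_insert_ne_add [DecidableEq V] [AddCommMonoid M] (e : ι × ι)
    (S : Finset (ι × ι)) (F : (ι → V) → M) :
    ∑ x with ∀ p ∈ insert e S, x p.1 ≠ x p.2, F x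
        + ∑ x with ∀ p ∈ S, x p.1 ≠ x p.2, (if x e.1 = x e.2 then F x else 0)
      = ∑ x with ∀ p ∈ S, x p.1 ≠ x p.2, F x := by
  simp only [sum_filter, ← sum_add_distrib, forall_mem_insert]
  refine sum_congr rfl fun x _ => ?_
  by_cases hx : x e.1 = x e.2 <;> simp [hx]

variable [DecidableEq V₁] [DecidableEq V₂] [Nonempty V₁] [AddCancelCommMonoid M]
  [IsAddTorsionFree M] {F₁ : (ι → V₁) → M} {F₂ : (ι → V₂) → M}

theorem sum_filter_eq_of_forall_sum_comp_eq
    (hcard : Fintype.card V₁ = Fintype.card V₂)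
    (h : ∀ f : ι → ι, ∑ x, F₁ (x ∘ f) = ∑ x, F₂ (x ∘ f)) (u v : ι) :
    ∑ x with x u = x v, F₁ x = ∑ x with x u = x v, F₂ x := by
  obtain rfl | huv := eq_or_ne u v
  · simpa using h id
  · apply nsmul_right_injective (Fintype.card_ne_zero (α := V₁))
    change Fintype.card V₁ • _ = Fintype.card V₁ • _
    rw [card_nsmul_sum_filter_eq huv, hcard, card_nsmul_sum_filter_eq huv]
    exact h (Function.update id u v)

-- Deletion–contraction: the assignments lost by imposing `x u ≠ x v` are those which factor
-- through merging `u` into `v`.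
theorem sum_filter_ne_eq_of_forall_sum_comp_eq
    (hcard : Fintype.card V₁ = Fintype.card V₂) (S : Finset (ι × ι))
    (h : ∀ f : ι → ι, ∑ x, F₁ (x ∘ f) = ∑ x, F₂ (x ∘ f)) :
    ∑ x with ∀ p ∈ S, x p.1 ≠ x p.2, F₁ x = ∑ x with ∀ p ∈ S, x p.1 ≠ x p.2, F₂ x := by
  induction S using Finset.induction generalizing F₁ F₂ with
  | empty => simpa using h id
  | insert e S _ ih =>
    have hmerged : ∑ x with ∀ p ∈ S, x p.1 ≠ x p.2, (if x e.1 = x e.2 then F₁ x else 0)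
        = ∑ x with ∀ p ∈ S, x p.1 ≠ x p.2, if x e.1 = x e.2 then F₂ x else 0 := ih fun f => by
      simpa only [sum_filter, Function.comp_apply] using
        sum_filter_eq_of_forall_sum_comp_eq hcard (F₁ := fun x => F₁ (x ∘ f))
          (F₂ := fun x => F₂ (x ∘ f)) (fun g => h (g ∘ f)) (f e.1) (f e.2)
    apply add_right_cancel
    rw [sum_filter_insert_ne_add e S F₁, hmerged, sum_filter_insert_ne_add e S F₂]
    exact ih h

theorem sum_injective_eq_of_forall_sum_comp_eq
    (hcard : Fintype.card V₁ = Fintype.card V₂)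
    (h : ∀ f : ι → ι, ∑ x, F₁ (x ∘ f) = ∑ x, F₂ (x ∘ f)) :
    ∑ x with Function.Injective x, F₁ x = ∑ x with Function.Injective x, F₂ x := by
  simpa only [injective_iff_forall_mem_offDiag] using
    sum_filter_ne_eq_of_forall_sum_comp_eq hcard _ h

end SumsOverAssignments

/-! ### Weighted homomorphism counts in coherent configurations -/

section CoherentColoring

variable {V V₁ V₂ κ ι R : Type*} [Fintype V] [Fintype V₁] [Fintype V₂] [Fintype κ]
  [Fintype ι] [DecidableEq ι] [CommSemiring R]

/-- The parameters of a homogeneous coherent configuration (association scheme) with colors `κ`: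
the color `diag` of the diagonal, the color `swap k` of the transpose of color `k`, and the
intersection numbers `num i j k`, counting the `z` such that `(x, z)` has color `i` and `(z, y)` has
color `j` when `(x, y)` has color `k`. -/
structure IntersectionNumbers (κ : Type*) where
  diag : κ
  swap : κ → κ
  num : κ → κ → κ → ℕ

/-- A coloring of the pairs of vertices which is a homogeneous coherent configuration with
parameters `P`. Colors need not be attained. -/
structure IsCoherentColoring [DecidableEq κ] (P : IntersectionNumbers κ) (col : V → V → κ) :
    Prop where
  self : ∀ x, col x x = P.diag
  swap : ∀ x y, col y x = P.swap (col x y)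
  card : ∀ x y i j, #{z | col x z = i ∧ col z y = j} = P.num i j (col x y)

/-- The product of two functions of colors in the adjacency (Bose–Mesner) algebra. -/
def IntersectionNumbers.conv (P : IntersectionNumbers κ) (f g : κ → R) (k : κ) : R :=
  ∑ i, ∑ j, P.num i j k * (f i * g j)

theorem IsCoherentColoring.sum_mul_eq_conv [DecidableEq κ] {P : IntersectionNumbers κ}
    {col : V → V → κ} (h : IsCoherentColoring P col) (f g : κ → R) (x y : V) :
    ∑ z, f (col x z) * g (col z y) = P.conv f g (col x y) := by
  simp only [IntersectionNumbers.conv, ← h.card, card_filter, Nat.cast_sum, sum_mul]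
  rw [sum_congr rfl fun i _ => sum_comm, sum_comm]
  simp [ite_and]

theorem prod_prod_eq_mul_prod_erase {M : Type*} [CommMonoid M] (F : ι → ι → M) (v : ι) :
    ∏ a, ∏ b, F a b
      = (∏ a ∈ univ.erase v, ∏ b ∈ univ.erase v, F a b)
        * (F v v * ∏ b ∈ univ.erase v, F b v * F v b) := by
  simp only [← mul_prod_erase univ _ (mem_univ v), prod_mul_distrib]
  ac_rfl

/-- A weighted pattern on the vertices `ι`: for each pair of vertices, a weight depending on the
color in `κ` to which the pair is mapped. -/
abbrev PairWeight (ι κ R : Type*) := ι → ι → κ → R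

namespace PairWeight

/-- The weighted count of maps `x : ι → V`, where the weight of `x` is the product over all pairs
`(a, b)` of the function `K a b` of the color of `(x a, x b)`. -/
def homSum (K : PairWeight ι κ R) (col : V → V → κ) : R :=
  ∑ x : ι → V, ∏ a, ∏ b, K a b (col (x a) (x b))

/-- The vertices `b ≠ a` for which the pair `{a, b}` carries a nontrivial weight. -/
def neighbors [DecidableEq R] (K : PairWeight ι κ R) (a : ι) : Finset ι :=
  {b | b ≠ a ∧ (K a b ≠ 1 ∨ K b a ≠ 1)}

/-- The weight of the pair `{b, v}`, as a function of the color of `(b, v)`. -/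
def edgeWeight (K : PairWeight ι κ R) (P : IntersectionNumbers κ) (b v : ι) : κ → R :=
  K b v * (K v b ∘ P.swap)

/-- The weight of the vertex `v` with neighbors `u` and `w`, summed over all images of `v`, as a
function of the color of `(u, w)`. The case `u = w` encodes a single neighbor. -/
def pathWeight (K : PairWeight ι κ R) (P : IntersectionNumbers κ) (u v w : ι) (k : κ) : R :=
  K v v P.diag *
    P.conv (K.edgeWeight P u v) (if u = w then 1 else K.edgeWeight P w v ∘ P.swap) k

/-- Remove the vertex `v` with neighbors `u` and `w`, moving its weight to the pair `(u, w)`. -/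
def eliminate (K : PairWeight ι κ R) (P : IntersectionNumbers κ) (u v w : ι) :
    PairWeight ι κ R := fun a b =>
  if a = v ∨ b = v then 1 else K a b * if a = u ∧ b = w then K.pathWeight P u v w else 1

variable {P : IntersectionNumbers κ} {K : PairWeight ι κ R} {u v w : ι} {col : V → V → κ}

theorem prod_prod_eliminate (hu : u ≠ v) (hw : w ≠ v) (F : ι → ι → κ) :
    ∏ a, ∏ b, K.eliminate P u v w a b (F a b)
      = (∏ a ∈ univ.erase v, ∏ b ∈ univ.erase v, K a b (F a b)) * K.pathWeight P u v w (F u w) := by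
  have hoff : ∀ a ∈ univ.erase v, ∀ b ∈ univ.erase v, K.eliminate P u v w a b (F a b)
      = K a b (F a b) * if a = u then if b = w then K.pathWeight P u v w (F u w) else 1 else 1 := by
    intro a ha b hb
    obtain ⟨rfl | hau, rfl | hbw⟩ := And.intro (eq_or_ne a u) (eq_or_ne b w) <;>
      simp_all [eliminate]
  have hstar : K.eliminate P u v w v v (F v v) * ∏ b ∈ univ.erase v,
      K.eliminate P u v w b v (F b v) * K.eliminate P u v w v b (F v b) = 1 := by
    simp [eliminate]
  rw [prod_prod_eq_mul_prod_erase _ v, hstar, mul_one,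
    prod_congr rfl fun a ha => prod_congr rfl (hoff a ha)]
  simp only [prod_mul_distrib]
  simp [hu, hw]

variable [DecidableEq R]

theorem mem_neighbors {a b : ι} : b ∈ K.neighbors a ↔ b ≠ a ∧ (K a b ≠ 1 ∨ K b a ≠ 1) := by
  simp [neighbors]

theorem mem_neighbors_comm {a b : ι} : b ∈ K.neighbors a ↔ a ∈ K.neighbors b := by
  simp only [mem_neighbors, ne_comm (a := a), or_comm]

theorem edgeWeight_eq_one {a b : ι} (hba : b ≠ a) (hb : b ∉ K.neighbors a) :
    K.edgeWeight P b a = 1 := by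
  obtain ⟨hab, hba⟩ : K a b = 1 ∧ K b a = 1 := by simpa [mem_neighbors, hba] using hb
  ext k
  simp [edgeWeight, hab, hba]

theorem sum_prod_edgeWeight [DecidableEq κ]
    (hP : IsCoherentColoring P col) (hv : K.neighbors v = {u, w}) (x : ι → V) :
    K v v P.diag * ∑ y, ∏ b ∈ univ.erase v, K.edgeWeight P b v (col (x b) y)
      = K.pathWeight P u v w (col (x u) (x w)) := by
  have hsub : {u, w} ⊆ univ.erase v := fun b hb =>
    mem_erase.2 ⟨(mem_neighbors.1 (hv ▸ hb)).1, mem_univ b⟩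
  rw [pathWeight, ← hP.sum_mul_eq_conv]
  congr 1
  refine sum_congr rfl fun y _ => ?_
  rw [← prod_subset hsub fun b hb hb' => by
    rw [edgeWeight_eq_one (ne_of_mem_erase hb) (hv ▸ hb'), Pi.one_apply]]
  split_ifs with huw
  · simp [huw]
  · simp [prod_pair huw, hP.swap y (x w)]

theorem card_nsmul_homSum [DecidableEq κ] (hP : IsCoherentColoring P col)
    (hv : K.neighbors v = {u, w}) :
    Fintype.card V • K.homSum col = (K.eliminate P u v w).homSum col := by
  have hu : u ≠ v := (mem_neighbors.1 (hv ▸ mem_insert_self u {w})).1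
  have hw : w ≠ v := (mem_neighbors.1 (hv ▸ mem_insert_of_mem (mem_singleton_self w))).1
  rw [homSum, ← sum_sum_update v, homSum]
  refine sum_congr rfl fun x _ => ?_
  rw [prod_prod_eliminate hu hw fun a b => col (x a) (x b), ← sum_prod_edgeWeight hP hv, mul_sum,
    mul_sum]
  refine sum_congr rfl fun y _ => ?_
  have hoff : ∀ b ∈ univ.erase v, Function.update x v y b = x b := fun b hb =>
    Function.update_of_ne (ne_of_mem_erase hb) y x
  rw [prod_prod_eq_mul_prod_erase _ v, Function.update_self, hP.self]
  refine congrArg₂ _ ?_ (congrArg₂ _ rfl ?_)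
  · exact prod_congr rfl fun a ha => prod_congr rfl fun b hb => by rw [hoff a ha, hoff b hb]
  · exact prod_congr rfl fun b hb => by simp [hoff b hb, edgeWeight, hP.swap (x b) y]

theorem homSum_of_forall_neighbors_eq_empty
    (hself : ∀ x, col x x = P.diag) (h : ∀ a, K.neighbors a = ∅) :
    K.homSum col = (Fintype.card V ^ Fintype.card ι : ℕ) • ∏ a, K a a P.diag := by
  have hoff : ∀ a b, b ≠ a → K a b = 1 := fun a b hba => by
    by_contra hne
    exact notMem_empty b (h a ▸ mem_neighbors.2 ⟨hba, .inl hne⟩)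
  have hterm (x : ι → V) : ∏ a, ∏ b, K a b (col (x a) (x b)) = ∏ a, K a a P.diag :=
    prod_congr rfl fun a _ => by
      rw [prod_eq_single_of_mem a (mem_univ a) fun b _ hb => by rw [hoff a b hb, Pi.one_apply],
        hself]
  simp [homSum, hterm]

theorem neighbors_eliminate_self : (K.eliminate P u v w).neighbors v = ∅ :=
  eq_empty_of_forall_notMem fun b hb => by simp [mem_neighbors, eliminate] at hb

theorem mem_neighbors_eliminate {a b : ι} (hb : b ∈ (K.eliminate P u v w).neighbors a) :
    b ≠ v ∧ (b ∈ K.neighbors a ∨ a = u ∧ b = w ∨ a = w ∧ b = u) := by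
  rw [mem_neighbors] at hb ⊢
  unfold eliminate at hb
  grind

theorem card_neighbors_eliminate_le (hv : K.neighbors v = {u, w}) (a : ι) :
    #((K.eliminate P u v w).neighbors a) ≤ #(K.neighbors a) := by
  by_cases ha : v ∈ K.neighbors a
  · obtain rfl | rfl : a = u ∨ a = w := by simpa [hv] using mem_neighbors_comm.1 ha
    · calc #((K.eliminate P a v w).neighbors a)
          ≤ #(insert w ((K.neighbors a).erase v)) := card_le_card fun b hb => by
            have := mem_neighbors_eliminate hb
            grind
        _ ≤ #(K.neighbors a) := (card_insert_le _ _).trans (card_erase_add_one ha).le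
    · calc #((K.eliminate P u v a).neighbors a)
          ≤ #(insert u ((K.neighbors a).erase v)) := card_le_card fun b hb => by
            have := mem_neighbors_eliminate hb
            grind
        _ ≤ #(K.neighbors a) := (card_insert_le _ _).trans (card_erase_add_one ha).le
  · refine card_le_card fun b hb => ?_
    have : a ≠ u ∧ a ≠ w := by
      rw [mem_neighbors_comm, hv] at ha
      simpa using ha
    have := mem_neighbors_eliminate hb
    grind

theorem card_filter_nonempty_neighbors_eliminate_lt (hv : K.neighbors v = {u, w}) :
    #{a | ((K.eliminate P u v w).neighbors a).Nonempty} < #{a | (K.neighbors a).Nonempty} := by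
  refine card_lt_card ((ssubset_iff_of_subset ?_).2 ⟨v, ?_⟩)
  · simpa [subset_iff, ← card_pos] using fun a h => h.trans_le (card_neighbors_eliminate_le hv a)
  · simp [neighbors_eliminate_self, hv]

theorem exists_neighbors_eq_pair (hne : (K.neighbors v).Nonempty) (hle : #(K.neighbors v) ≤ 2) :
    ∃ u w, K.neighbors v = {u, w} := by
  obtain h | h : #(K.neighbors v) = 1 ∨ #(K.neighbors v) = 2 := by
    have := hne.card_pos
    omega
  · obtain ⟨u, hu⟩ := card_eq_one.1 h
    exact ⟨u, u, by simpa using hu⟩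
  · obtain ⟨u, w, -, huw⟩ := card_eq_two.1 h
    exact ⟨u, w, huw⟩

theorem exists_card_neighbors_le_two (hK : #{v | 2 < #(K.neighbors v)} ≤ 3)
    (h : ∃ v, (K.neighbors v).Nonempty) :
    ∃ v, (K.neighbors v).Nonempty ∧ #(K.neighbors v) ≤ 2 := by
  by_contra! hlarge
  obtain ⟨v, hv⟩ := h
  have hsub : insert v (K.neighbors v) ⊆ ({a | 2 < #(K.neighbors a)} : Finset ι) :=
    insert_subset (by simpa using hlarge v hv) fun b hb => by
      simpa using hlarge b ⟨v, mem_neighbors_comm.1 hb⟩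
  have hcard := card_le_card hsub
  rw [card_insert_of_notMem fun h => (mem_neighbors.1 h).1 rfl] at hcard
  have := hlarge v hv
  omega

theorem homSum_eq_homSum [DecidableEq κ] [IsAddTorsionFree R] [Nonempty V₁]
    {col₁ : V₁ → V₁ → κ} {col₂ : V₂ → V₂ → κ} {K : PairWeight ι κ R}
    (h₁ : IsCoherentColoring P col₁) (h₂ : IsCoherentColoring P col₂)
    (hcard : Fintype.card V₁ = Fintype.card V₂) (hK : #{v | 2 < #(K.neighbors v)} ≤ 3) :
    K.homSum col₁ = K.homSum col₂ := by
  by_cases hactive : ∃ v, (K.neighbors v).Nonempty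
  · obtain ⟨v, hne, hle⟩ := exists_card_neighbors_le_two hK hactive
    obtain ⟨u, w, hv⟩ := exists_neighbors_eq_pair hne hle
    apply nsmul_right_injective (Fintype.card_ne_zero (α := V₁))
    change Fintype.card V₁ • _ = Fintype.card V₁ • _
    rw [card_nsmul_homSum h₁ hv, hcard, card_nsmul_homSum h₂ hv]
    have hK' : #{a | 2 < #((K.eliminate P u v w).neighbors a)} ≤ #{a | 2 < #(K.neighbors a)} :=
      card_le_card (monotone_filter_right univ fun a _ h =>
        h.trans_le (card_neighbors_eliminate_le hv a))
    exact homSum_eq_homSum h₁ h₂ hcard (hK'.trans hK)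
  · push Not at hactive
    rw [homSum_of_forall_neighbors_eq_empty h₁.self hactive, hcard,
      homSum_of_forall_neighbors_eq_empty h₂.self hactive]
termination_by #{v | (K.neighbors v).Nonempty}
decreasing_by exact card_filter_nonempty_neighbors_eliminate_lt hv

end PairWeight

end CoherentColoring

/-! ### Multidigraphs with few arcs -/

theorem eq_ite_mem_of_sum_le {ι : Type*} [Fintype ι] [DecidableEq ι] {f : ι → ℕ}
    {B : Finset ι} {k n : ℕ} (hn : n ≤ #B) (hB : ∀ v ∈ B, k ≤ f v) (hf : ∑ v, f v ≤ n * k)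
    (v : ι) :
    f v = if v ∈ B then k else 0 := by
  have hle : ∀ v ∈ univ, (if v ∈ B then k else 0) ≤ f v := fun v _ => by
    split_ifs with hv
    exacts [hB v hv, Nat.zero_le _]
  have hsum : ∑ v, (if v ∈ B then k else 0) = #B * k := by simp [sum_ite_mem]
  refine ((sum_eq_sum_iff_of_le hle).1 ((sum_le_sum hle).antisymm ?_) v (mem_univ v)).symm
  exact hsum ▸ hf.trans (Nat.mul_le_mul_right k hn)

/-- A directed multigraph on `ι`, possibly with loops, encoded by its arc multiplicities. -/
abbrev Multidigraph (ι : Type*) := ι → ι → ℕ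

namespace Multidigraph

variable {ι κ V : Type*} [Fintype ι] {m : Multidigraph ι} {a c v : ι}

/-- The number of arcs leaving `v`, counted with multiplicity. -/
def outDegree (m : Multidigraph ι) (v : ι) : ℕ := ∑ b, m v b

/-- The number of arcs entering `v`, counted with multiplicity. -/
def inDegree (m : Multidigraph ι) (v : ι) : ℕ := ∑ a, m a v

/-- The heads of the arcs leaving `v`, without multiplicity. -/
def outNeighbors (m : Multidigraph ι) (v : ι) : Finset ι := {b | m v b ≠ 0}

/-- The tails of the arcs entering `v`, without multiplicity. -/
def inNeighbors (m : Multidigraph ι) (v : ι) : Finset ι := {a | m a v ≠ 0}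

/-- Every vertex has as many arcs entering it as leaving it. -/
def IsBalanced (m : Multidigraph ι) : Prop := ∀ v, m.outDegree v = m.inDegree v

/-- The vertex map `x` sends every arc to a pair related by `r`. -/
def IsHom (m : Multidigraph ι) (r : V → V → Prop) (x : ι → V) : Prop :=
  ∀ a b, m a b ≠ 0 → r (x a) (x b)

/-- There are neither loops nor pairs of opposite arcs; parallel arcs are allowed. -/
def IsOriented (m : Multidigraph ι) : Prop := ∀ a b, m a b ≠ 0 → m b a = 0

theorem mem_outNeighbors : c ∈ m.outNeighbors a ↔ m a c ≠ 0 := by simp [outNeighbors]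

theorem mem_inNeighbors : a ∈ m.inNeighbors c ↔ m a c ≠ 0 := by simp [inNeighbors]

theorem card_outNeighbors_le_outDegree : #(m.outNeighbors v) ≤ m.outDegree v := by
  rw [outNeighbors, card_filter, outDegree]
  exact sum_le_sum fun b _ => by split_ifs <;> omega

theorem card_inNeighbors_le_inDegree : #(m.inNeighbors v) ≤ m.inDegree v := by
  rw [inNeighbors, card_filter, inDegree]
  exact sum_le_sum fun a _ => by split_ifs <;> omega

theorem sum_card_outNeighbors_eq_sum_card_inNeighbors :
    ∑ v, #(m.outNeighbors v) = ∑ v, #(m.inNeighbors v) :=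
  sum_card_bipartiteAbove_eq_sum_card_bipartiteBelow fun a b => m a b ≠ 0

theorem outNeighbors_eq_empty (h : m.outDegree v = 0) : m.outNeighbors v = ∅ :=
  card_eq_zero.1 (Nat.le_zero.1 (card_outNeighbors_le_outDegree.trans h.le))

theorem inNeighbors_eq_empty (h : m.inDegree v = 0) : m.inNeighbors v = ∅ :=
  card_eq_zero.1 (Nat.le_zero.1 (card_inNeighbors_le_inDegree.trans h.le))

theorem outNeighbors_subset {B : Finset ι} (h : ∀ b ∉ B, m.inDegree b = 0) :
    m.outNeighbors v ⊆ B := fun b hb => by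
  by_contra hbB
  exact notMem_empty v
    (inNeighbors_eq_empty (h b hbB) ▸ mem_inNeighbors.2 (mem_outNeighbors.1 hb))

theorem inNeighbors_subset {B : Finset ι} (h : ∀ b ∉ B, m.outDegree b = 0) :
    m.inNeighbors v ⊆ B := fun b hb => by
  by_contra hbB
  exact notMem_empty v
    (outNeighbors_eq_empty (h b hbB) ▸ mem_outNeighbors.2 (mem_inNeighbors.1 hb))

theorem inNeighbors_eq_singleton (h : m.outNeighbors a = {c})
    (hdeg : m.inDegree c ≤ m.outDegree a) : m.inNeighbors c = {a} := by
  have hout : m.outDegree a = m a c := Fintype.sum_eq_single c fun b hb => by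
    by_contra hab
    exact hb (mem_singleton.1 (h ▸ mem_outNeighbors.2 hab))
  have hac : m a c ≠ 0 := mem_outNeighbors.1 (h ▸ mem_singleton_self c)
  refine eq_singleton_iff_unique_mem.2 ⟨mem_inNeighbors.2 hac, fun b hb => ?_⟩
  by_contra hba
  have hle : m b c + m a c ≤ m.inDegree c :=
    add_le_sum (f := fun a => m a c) (fun _ _ => Nat.zero_le _) (mem_univ b) (mem_univ a) hba
  have := mem_inNeighbors.1 hb
  omega

theorem IsOriented.disjoint_neighbors (h : m.IsOriented) :
    Disjoint (m.outNeighbors v) (m.inNeighbors v) :=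
  disjoint_left.2 fun _ hout hin =>
    mem_inNeighbors.1 hin (h _ _ (mem_outNeighbors.1 hout))

omit [Fintype ι] in
theorem IsOriented.ne (h : m.IsOriented) (hac : m a c ≠ 0) : a ≠ c := by
  rintro rfl
  exact hac (h _ _ hac)

theorem IsOriented.neighbors_union_eq_erase [DecidableEq ι] (h : m.IsOriented) {B : Finset ι}
    (hout : m.outNeighbors v ⊆ B) (hin : m.inNeighbors v ⊆ B) (hv : v ∈ B)
    (hcard : #B ≤ #(m.outNeighbors v) + #(m.inNeighbors v) + 1) :
    m.outNeighbors v ∪ m.inNeighbors v = B.erase v := by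
  refine eq_of_subset_of_card_le (subset_erase.2 ⟨union_subset hout hin, fun hmem => ?_⟩) ?_
  · have hvv : m v v ≠ 0 := by simpa [mem_outNeighbors, mem_inNeighbors] using hmem
    exact h.ne hvv rfl
  · rw [card_union_of_disjoint h.disjoint_neighbors, card_erase_of_mem hv]
    omega

theorem exists_ne_of_card_outNeighbors_eq_one [DecidableEq ι] {B : Finset ι} (hB : #B = 4)
    (hdeg : ∀ v, m.outDegree v = if v ∈ B then 2 else 0) (hbal : m.IsBalanced)
    (hnbr : ∀ v ∈ B, #(m.outNeighbors v) + #(m.inNeighbors v) = 3) :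
    ∃ a ∈ B, ∃ c ∈ B, a ≠ c ∧ #(m.outNeighbors a) = 1 ∧ #(m.outNeighbors c) = 1 := by
  have hoff : ∀ v ∉ B, m.outDegree v = 0 := fun v hv => by simp [hdeg, hv]
  have hsum : ∑ v ∈ B, #(m.outNeighbors v) = ∑ v ∈ B, #(m.inNeighbors v) := by
    rw [sum_subset (subset_univ B) fun v _ hv => by
        rw [outNeighbors_eq_empty (hoff v hv), card_empty],
      sum_subset (subset_univ B) fun v _ hv => by
        rw [inNeighbors_eq_empty (hbal v ▸ hoff v hv), card_empty],
      sum_card_outNeighbors_eq_sum_card_inNeighbors]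
  have htotal : ∑ v ∈ B, #(m.outNeighbors v) + ∑ v ∈ B, #(m.inNeighbors v) = 12 := by
    rw [← sum_add_distrib, sum_congr rfl hnbr, sum_const, hB, smul_eq_mul]
  have hone : ∑ v ∈ B, #(m.outNeighbors v) + #{v ∈ B | #(m.outNeighbors v) = 1} = 8 := by
    have hterm : ∀ v ∈ B, #(m.outNeighbors v) + (if #(m.outNeighbors v) = 1 then 1 else 0) = 2 :=
      fun v hv => by
        have hdeg2 : m.outDegree v = 2 := by simp [hdeg, hv]
        have hout := (card_outNeighbors_le_outDegree (m := m) (v := v)).trans_eq hdeg2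
        have hin := (card_inNeighbors_le_inDegree (m := m) (v := v)).trans_eq (hbal v ▸ hdeg2)
        have := hnbr v hv
        split_ifs <;> omega
    rw [card_filter, ← sum_add_distrib, sum_congr rfl hterm, sum_const, hB, smul_eq_mul]
  obtain ⟨a, ha, c, hc, hac⟩ := one_lt_card.1
    (show 1 < #{v ∈ B | #(m.outNeighbors v) = 1} by omega)
  rw [mem_filter] at ha hc
  exact ⟨a, ha.1, c, hc.1, hac, ha.2, hc.2⟩

-- Four vertices with at least three neighbors would use up all eight arcs: they would have in- and
-- out-degree two and induce a tournament on their supports. Two of them would then have a single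
-- out-neighbor, but the double arc joining those two gives its head a single in-neighbor, hence two
-- out-neighbors.
theorem IsBalanced.card_filter_two_lt_le_three (hbal : m.IsBalanced) (hor : m.IsOriented)
    (hm : ∑ v, m.outDegree v ≤ 8) :
    #{v | 2 < #(m.outNeighbors v) + #(m.inNeighbors v)} ≤ 3 := by
  classical
  by_contra! hlarge
  set B : Finset ι := {v | 2 < #(m.outNeighbors v) + #(m.inNeighbors v)} with hBdef
  have hnbr : ∀ v ∈ B, 2 < #(m.outNeighbors v) + #(m.inNeighbors v) := by simp [hBdef]
  have hdeg := eq_ite_mem_of_sum_le (n := 4) (k := 2) hlarge (fun v hv => by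
    have := hnbr v hv
    have := card_outNeighbors_le_outDegree (m := m) (v := v)
    have := (card_inNeighbors_le_inDegree (m := m) (v := v)).trans_eq (hbal v).symm
    omega) hm
  have hB : #B = 4 := by
    have : ∑ v, m.outDegree v = #B * 2 := by simp [hdeg, sum_ite_mem]
    omega
  have hoff : ∀ v ∉ B, m.outDegree v = 0 := fun v hv => by simp [hdeg, hv]
  have hunion : ∀ v ∈ B, m.outNeighbors v ∪ m.inNeighbors v = B.erase v := fun v hv => by
    refine hor.neighbors_union_eq_erase (outNeighbors_subset fun b hb => hbal b ▸ hoff b hb)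
      (inNeighbors_subset hoff) hv ?_
    have := hnbr v hv
    omega
  have hthree : ∀ v ∈ B, #(m.outNeighbors v) + #(m.inNeighbors v) = 3 := fun v hv => by
    rw [← card_union_of_disjoint hor.disjoint_neighbors, hunion v hv, card_erase_of_mem hv, hB]
  have hnoarc : ∀ a ∈ B, ∀ c ∈ B, #(m.outNeighbors a) = 1 → #(m.outNeighbors c) = 1 →
      m a c = 0 := fun a ha c hc hout_a hout_c => by
    by_contra hac
    obtain ⟨d, hd⟩ := card_eq_one.1 hout_a
    obtain rfl : c = d := mem_singleton.1 (hd ▸ mem_outNeighbors.2 hac)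
    have hin := inNeighbors_eq_singleton hd (by simp [← hbal c, hdeg, ha, hc])
    have := hthree c hc
    rw [hout_c, hin, card_singleton] at this
    omega
  obtain ⟨a, ha, c, hc, hac, hout_a, hout_c⟩ :=
    exists_ne_of_card_outNeighbors_eq_one hB hdeg hbal hthree
  have hadj : c ∈ m.outNeighbors a ∪ m.inNeighbors a :=
    hunion a ha ▸ mem_erase.2 ⟨hac.symm, hc⟩
  rcases mem_union.1 hadj with h | h
  · exact mem_outNeighbors.1 h (hnoarc a ha c hc hout_a hout_c)
  · exact mem_inNeighbors.1 h (hnoarc c hc a ha hout_c hout_a)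

section Contract

variable [DecidableEq κ] [Fintype κ] (f : ι → κ)

omit [Fintype κ] in
/-- The image of a multidigraph under the identification of vertices with equal values of `f`.
Arcs inside a fiber become loops. -/
def contract (f : ι → κ) (m : Multidigraph ι) : Multidigraph κ :=
  fun c d => ∑ a with f a = c, ∑ b with f b = d, m a b

theorem outDegree_contract (c : κ) :
    (m.contract f).outDegree c = ∑ a with f a = c, m.outDegree a := by
  simp only [outDegree, contract]
  rw [sum_comm]
  exact sum_congr rfl fun a _ => sum_fiberwise univ f (m a)

theorem inDegree_contract (d : κ) :
    (m.contract f).inDegree d = ∑ b with f b = d, m.inDegree b := by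
  simp only [inDegree, contract]
  rw [sum_fiberwise univ f fun a => ∑ b with f b = d, m a b, sum_comm]

theorem IsBalanced.contract (h : m.IsBalanced) : (m.contract f).IsBalanced := fun c => by
  rw [outDegree_contract, inDegree_contract]
  exact sum_congr rfl fun a _ => h a

theorem sum_outDegree_contract : ∑ c, (m.contract f).outDegree c = ∑ a, m.outDegree a := by
  simp only [outDegree_contract]
  exact sum_fiberwise univ f m.outDegree

omit [Fintype κ] in
theorem contract_ne_zero_iff {c d : κ} :
    m.contract f c d ≠ 0 ↔ ∃ a b, f a = c ∧ f b = d ∧ m a b ≠ 0 := by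
  simp [contract, sum_eq_zero_iff]

omit [Fintype κ] in
theorem isHom_contract_iff {r : V → V → Prop} {x : κ → V} :
    (m.contract f).IsHom r x ↔ m.IsHom r (x ∘ f) := by
  simp only [IsHom, contract_ne_zero_iff, Function.comp_apply]
  grind

end Contract

section HomWeight

variable [DecidableEq κ] {k₀ : κ}

omit [Fintype ι] in
/-- The pair weights whose products are the indicators of homomorphisms from `m` to the digraph of
the pairs with color `k₀`. -/
def homWeight (m : Multidigraph ι) (k₀ : κ) : PairWeight ι κ ℕ :=
  fun a b k => if m a b ≠ 0 → k = k₀ then 1 else 0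

theorem homSum_homWeight [DecidableEq ι] [Fintype V] (col : V → V → κ) :
    (m.homWeight k₀).homSum col = Nat.card {x : ι → V // m.IsHom (fun x y => col x y = k₀) x} := by
  simp [PairWeight.homSum, homWeight, prod_boole, IsHom, Nat.card_eq_fintype_card,
    Fintype.card_subtype]

variable [DecidableEq ι] [Fintype κ]

theorem neighbors_homWeight_subset (a : ι) :
    (m.homWeight k₀).neighbors a ⊆ m.outNeighbors a ∪ m.inNeighbors a := fun b hb => by
  have htrivial : ∀ c d, m c d = 0 → m.homWeight k₀ c d = 1 := fun c d hcd => by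
    ext k
    simp [homWeight, hcd]
  rw [PairWeight.mem_neighbors] at hb
  rw [mem_union, mem_outNeighbors, mem_inNeighbors]
  exact hb.2.imp (mt (htrivial a b)) (mt (htrivial b a))

theorem IsBalanced.card_filter_two_lt_card_neighbors_homWeight (hbal : m.IsBalanced)
    (hor : m.IsOriented) (hm : ∑ a, m.outDegree a ≤ 8) :
    #{a | 2 < #((m.homWeight k₀).neighbors a)} ≤ 3 := by
  refine le_trans (card_le_card (monotone_filter_right univ fun a _ h => ?_))
    (hbal.card_filter_two_lt_le_three hor hm)
  exact h.trans_le ((card_le_card (neighbors_homWeight_subset a)).trans (card_union_le _ _))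

end HomWeight

/-- The directed cycle of length `n`. -/
def cycle (n : ℕ) : Multidigraph (ZMod n) := fun a b => if b = a + 1 then 1 else 0

theorem isHom_cycle_iff {n : ℕ} {r : V → V → Prop} {x : ZMod n → V} :
    (cycle n).IsHom r x ↔ ∀ k, r (x k) (x (k + 1)) := by
  simp [IsHom, cycle]

theorem outDegree_cycle {n : ℕ} [NeZero n] (a : ZMod n) : (cycle n).outDegree a = 1 := by
  simp [outDegree, cycle]

theorem isBalanced_cycle (n : ℕ) [NeZero n] : (cycle n).IsBalanced := fun a => by
  simp [outDegree_cycle, inDegree, cycle, ← sub_eq_iff_eq_add]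

theorem sum_outDegree_cycle (n : ℕ) [NeZero n] : ∑ a, (cycle n).outDegree a = n := by
  simp [outDegree_cycle, ZMod.card]

end Multidigraph

/-! ### Doubly regular tournaments -/

namespace Tournament

variable {V : Type*} (T : Tournament V) {t : ℕ} {x y : V}

variable {T} in
theorem ne (h : T.r x y) : x ≠ y := by
  rintro rfl
  exact T.irrefl x h

variable {T} in
theorem asymm (h : T.r x y) : ¬ T.r y x :=
  (T.total x y (ne h)).1 h

theorem r_or_r (h : x ≠ y) : T.r x y ∨ T.r y x :=
  or_iff_not_imp_right.2 (T.total x y h).2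

/-- The color of the pair `(x, y)`: `1` if `x` dominates `y`, `-1` if `y` dominates `x`, and `0` on
the diagonal. -/
def sign (x y : V) : SignType :=
  if T.r x y then 1 else if T.r y x then -1 else 0

theorem sign_eq_one_iff : T.sign x y = 1 ↔ T.r x y := by
  unfold sign
  split_ifs <;> simp_all

theorem sign_eq_neg_one_iff : T.sign x y = -1 ↔ T.r y x := by
  unfold sign
  split_ifs with hxy
  · simpa using asymm hxy
  all_goals simp_all

theorem sign_eq_zero_iff : T.sign x y = 0 ↔ x = y := by
  unfold sign
  split_ifs with hxy hyx
  · simpa using ne hxy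
  · simpa using (ne hyx).symm
  · simpa using not_imp_comm.1 T.r_or_r (not_or.2 ⟨hxy, hyx⟩)

theorem sign_swap (x y : V) : T.sign y x = -T.sign x y := by
  obtain rfl | hxy := eq_or_ne x y
  · simp [T.sign_eq_zero_iff.2 rfl]
  · obtain h | h := T.r_or_r hxy
    · rw [T.sign_eq_one_iff.2 h, T.sign_eq_neg_one_iff.2 h]
    · rw [T.sign_eq_one_iff.2 h, T.sign_eq_neg_one_iff.2 h, neg_neg]

theorem card_filter_add_card_filter_add_ite [DecidableEq V] (S : Finset V) (y : V) :
    #{z ∈ S | T.r z y} + #{z ∈ S | T.r y z} + (if y ∈ S then 1 else 0) = #S := by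
  rw [card_filter, card_filter, ← sum_ite_eq' S y fun _ => 1, ← sum_add_distrib,
    ← sum_add_distrib, card_eq_sum_ones]
  refine sum_congr rfl fun z _ => ?_
  obtain rfl | hzy := eq_or_ne z y
  · simp [T.irrefl]
  · obtain h | h := T.r_or_r hzy <;> simp [h, asymm h, hzy]

theorem two_mul_sum_card_filter_add_card (S : Finset V) :
    2 * ∑ y ∈ S, #{z ∈ S | T.r y z} + #S = #S * #S := by
  classical
  have hdouble : ∑ y ∈ S, #{z ∈ S | T.r z y} = ∑ y ∈ S, #{z ∈ S | T.r y z} :=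
    (sum_card_bipartiteAbove_eq_sum_card_bipartiteBelow T.r).symm
  have hsum : ∑ y ∈ S, (#{z ∈ S | T.r z y} + #{z ∈ S | T.r y z} + 1) = #S * #S := by
    rw [← smul_eq_mul, ← sum_const]
    refine sum_congr rfl fun y hy => ?_
    simpa [hy] using T.card_filter_add_card_filter_add_ite S y
  rw [sum_add_distrib, sum_add_distrib, hdouble, ← card_eq_sum_ones] at hsum
  omega

namespace IsDoublyRegular

variable {T} [Fintype V] (h : T.IsDoublyRegular t)
include h

theorem card_common_out (hxy : x ≠ y) : #{z | T.r x z ∧ T.r y z} = t := by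
  rw [← h x y hxy, Nat.card_eq_fintype_card, Fintype.card_subtype]

theorem card_out_le (x : V) : #{z | T.r x z} ≤ 2 * t + 1 := by
  have hcount := T.two_mul_sum_card_filter_add_card {z | T.r x z}
  have hcommon : ∀ y ∈ ({z | T.r x z} : Finset V), #{z ∈ {z | T.r x z} | T.r y z} = t :=
    fun y hy => by rw [filter_filter, h.card_common_out (ne (mem_filter.1 hy).2)]
  rw [sum_congr rfl hcommon, sum_const, smul_eq_mul] at hcount
  nlinarith

variable (hV : Fintype.card V = 4 * t + 3)
include hV

theorem card_out (x : V) : #{z | T.r x z} = 2 * t + 1 := by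
  refine (sum_eq_sum_iff_of_le fun x _ => h.card_out_le x).1 ?_ x (mem_univ x)
  have hcount := T.two_mul_sum_card_filter_add_card univ
  rw [card_univ, hV] at hcount
  rw [sum_const, card_univ, hV, smul_eq_mul]
  linarith

theorem card_in (x : V) : #{z | T.r z x} = 2 * t + 1 := by
  classical
  have := T.card_filter_add_card_filter_add_ite univ x
  rw [h.card_out hV, card_univ, hV, if_pos (mem_univ x)] at this
  omega

theorem card_between_add_ite (hxy : x ≠ y) :
    #{z | T.r x z ∧ T.r z y} + (if T.r x y then 1 else 0) = t + 1 := by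
  classical
  have hcount := T.card_filter_add_card_filter_add_ite {z | T.r x z} y
  simp only [filter_filter, mem_filter_univ] at hcount
  rw [h.card_common_out hxy, h.card_out hV] at hcount
  omega

theorem card_common_in (hxy : x ≠ y) : #{z | T.r z x ∧ T.r z y} = t := by
  classical
  have hcount := T.card_filter_add_card_filter_add_ite {z | T.r z y} x
  simp only [filter_filter, mem_filter_univ, and_comm (a := T.r _ y)] at hcount
  rw [h.card_in hV] at hcount
  have := h.card_between_add_ite hV hxy
  omega

end IsDoublyRegular

/-- The intersection numbers of the coloring `Tournament.sign` of a doubly regular tournament of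
order `4 * t + 3`. -/
def doublyRegularNumbers (t : ℕ) : IntersectionNumbers SignType where
  diag := 0
  swap := Neg.neg
  num i j k :=
    if i = 0 then if j = k then 1 else 0
    else if j = 0 then if i = k then 1 else 0
    else if k = 0 then if j = -i then 2 * t + 1 else 0
    else if i = j ∧ k = -i then t + 1 else t

theorem IsDoublyRegular.card_sign_eq_and_sign_eq {T : Tournament V} [Fintype V]
    (h : T.IsDoublyRegular t) (hV : Fintype.card V = 4 * t + 3) (x y : V) (i j : SignType) :
    #{z | T.sign x z = i ∧ T.sign z y = j} = (doublyRegularNumbers t).num i j (T.sign x y) := by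
  classical
  unfold doublyRegularNumbers
  obtain rfl | hi := eq_or_ne i 0
  · simp [card_filter, ite_and, sign_eq_zero_iff, eq_comm (a := j)]
  obtain rfl | hj := eq_or_ne j 0
  · simp [card_filter, and_comm, ite_and, sign_eq_zero_iff, hi, eq_comm (a := T.sign x y)]
  replace hi : i = 1 ∨ i = -1 := by have := i.trichotomy; tauto
  replace hj : j = 1 ∨ j = -1 := by have := j.trichotomy; tauto
  obtain rfl | hxy := eq_or_ne x y
  · have hnone : ∀ z, ¬ (T.r x z ∧ T.r z x) := fun z hz => asymm hz.1 hz.2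
    have hnone' : ∀ z, ¬ (T.r z x ∧ T.r x z) := fun z hz => asymm hz.1 hz.2
    rw [T.sign_eq_zero_iff.2 rfl]
    rcases hi with rfl | rfl <;> rcases hj with rfl | rfl <;>
      simp [sign_eq_one_iff, sign_eq_neg_one_iff, h.card_in hV, h.card_out hV, hnone, hnone']
  · have hforward := h.card_between_add_ite hV hxy
    have hbackward := h.card_between_add_ite hV hxy.symm
    simp only [and_comm (a := T.r y _)] at hbackward
    obtain hr | hr := T.r_or_r hxy
    all_goals
      simp only [hr, asymm hr, if_true, if_false, add_zero, Nat.add_right_cancel_iff]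
        at hforward hbackward
      rcases hi with rfl | rfl <;> rcases hj with rfl | rfl <;>
        simp [sign_eq_one_iff, sign_eq_neg_one_iff, sign_eq_zero_iff, hxy, hr, asymm hr, hforward,
          hbackward, h.card_common_in hV hxy, h.card_common_out hxy]

theorem IsDoublyRegular.isCoherentColoring_sign {T : Tournament V} [Fintype V]
    (h : T.IsDoublyRegular t) (hV : Fintype.card V = 4 * t + 3) :
    IsCoherentColoring (doublyRegularNumbers t) T.sign where
  self _ := T.sign_eq_zero_iff.2 rfl
  swap := T.sign_swap
  card := h.card_sign_eq_and_sign_eq hV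

section Counting

open Multidigraph

variable {ι V₁ V₂ : Type*} [Fintype ι] {m : Multidigraph ι} [Fintype V₁] [Fintype V₂]
  {T₁ : Tournament V₁} {T₂ : Tournament V₂}

omit [Fintype ι] in
variable {T} in
theorem isOriented_of_isHom {x : ι → V} (hx : m.IsHom T.r x) : m.IsOriented := fun a b hab =>
  not_not.1 fun hba => asymm (hx a b hab) (hx b a hba)

variable (h₁ : T₁.IsDoublyRegular t) (h₂ : T₂.IsDoublyRegular t)
  (hV₁ : Fintype.card V₁ = 4 * t + 3) (hV₂ : Fintype.card V₂ = 4 * t + 3)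
include h₁ h₂ hV₁ hV₂

theorem card_isHom_eq_card_isHom (hbal : m.IsBalanced) (hm : ∑ a, m.outDegree a ≤ 8) :
    Nat.card {x : ι → V₁ // m.IsHom T₁.r x} = Nat.card {x : ι → V₂ // m.IsHom T₂.r x} := by
  classical
  by_cases hor : m.IsOriented
  · have : Nonempty V₁ := Fintype.card_pos_iff.1 (by omega)
    simpa only [homSum_homWeight, sign_eq_one_iff, Nat.cast_id] using
      PairWeight.homSum_eq_homSum (h₁.isCoherentColoring_sign hV₁) (h₂.isCoherentColoring_sign hV₂)
        (hV₁.trans hV₂.symm) (hbal.card_filter_two_lt_card_neighbors_homWeight (k₀ := 1) hor hm)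
  · have : IsEmpty {x : ι → V₁ // m.IsHom T₁.r x} := ⟨fun x => hor (isOriented_of_isHom x.2)⟩
    have : IsEmpty {x : ι → V₂ // m.IsHom T₂.r x} := ⟨fun x => hor (isOriented_of_isHom x.2)⟩
    simp

theorem card_injective_isHom_eq_card_injective_isHom (hbal : m.IsBalanced)
    (hm : ∑ a, m.outDegree a ≤ 8) :
    Nat.card {x : ι → V₁ // Function.Injective x ∧ m.IsHom T₁.r x}
      = Nat.card {x : ι → V₂ // Function.Injective x ∧ m.IsHom T₂.r x} := by
  classical
  have : Nonempty V₁ := Fintype.card_pos_iff.1 (by omega)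
  simp only [Nat.card_eq_fintype_card, Fintype.card_subtype, ← filter_filter]
  rw [card_filter, card_filter]
  refine sum_injective_eq_of_forall_sum_comp_eq (hV₁.trans hV₂.symm) fun f => ?_
  simpa [Nat.card_eq_fintype_card, Fintype.card_subtype, isHom_contract_iff] using
    card_isHom_eq_card_isHom h₁ h₂ hV₁ hV₂ (hbal.contract f)
      ((sum_outDegree_contract f).trans_le hm)

end Counting

end Tournament

theorem eight_cycles_doubly_regular_independent_of_choice_general {V₁ V₂ : Type*} [Fintype V₁]
    [Fintype V₂] {t m : ℕ} [NeZero m] (hm : m ≤ 8) {T₁ : Tournament V₁} {T₂ : Tournament V₂}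
    (h₁ : T₁.IsDoublyRegular t) (h₂ : T₂.IsDoublyRegular t)
    (hV₁ : Fintype.card V₁ = 4 * t + 3) (hV₂ : Fintype.card V₂ = 4 * t + 3) :
    numCycles T₁.r m = numCycles T₂.r m := by
  have := Tournament.card_injective_isHom_eq_card_injective_isHom h₁ h₂ hV₁ hV₂
    (Multidigraph.isBalanced_cycle m) ((Multidigraph.sum_outDegree_cycle m).trans_le hm)
  simp only [Multidigraph.isHom_cycle_iff] at this
  rw [numCycles, numCycles, this]

theorem eight_cycles_doubly_regular_independent_of_choice
    (t n : ℕ) (hn : n = 4 * t + 3)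
    (T₁ T₂ : Tournament (Fin n))
    (h₁ : T₁.IsDoublyRegular t) (h₂ : T₂.IsDoublyRegular t) :
    numCycles T₁.r 8 = numCycles T₂.r 8 :=
  eight_cycles_doubly_regular_independent_of_choice_general le_rfl h₁ h₂
    (by rw [Fintype.card_fin, hn]) (by rw [Fintype.card_fin, hn])
end

section
/- For each odd n ≥ 1, the number of 8-cycles in the regular locally transitive tournament RLT_n satisfies c_8(RLT_n) = (n+1)·n·(n−1)·(n−3)·(n−5)·(n−7)·(83n²−575n+510)/161280. -/
/-- The dominance relation of the regular locally transitive tournament `RLT_n`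
on `ZMod n` (for odd `n`): there is an arc `(i,j)` iff
`(j - i) mod n ∈ {1, …, (n-1)/2}`. -/
def rltAdj (n : ℕ) (i j : ZMod n) : Prop :=
  (j - i).val ∈ Finset.Icc 1 ((n - 1) / 2)

/-! Doubling `i ↦ 2 * i` turns `RLT_n`, for `n = 2 * m + 1`, into the transitive tournament on the
residues `0 < 1 < ⋯ < 2 * m` with the arcs between residues of different parity reversed. Along a
walk the parity therefore changes exactly at the steps that are not ascents, so the relative order
of the vertices of a closed walk through the even residue `2 * m` forces all their parities. The
increasing sequences `g 0 < ⋯ < g k` in `{0, …, 2 * m - 1}` with prescribed parities correspond,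
through `g i ↦ g i / 2 + a i` with `a i` the number of ascents from even to odd among
`g 0, …, g i`, to all increasing sequences in `{0, …, m + a k - 1}`, so there are
`(m + a k).choose (k + 1)` of them. By translation an 8-cycle may be assumed to start at the vertex
`m`, whose double `2 * m` is the largest residue, and it remains to sum over the `7!` relative
orders of the other seven vertices. -/

open Equiv (Perm)

/-- The closed walks of `m` distinct vertices along arcs of `r` that are counted by
`numCycles r m`. -/
def IsCyclicSeq {V : Type*} (r : V → V → Prop) (m : ℕ) (γ : ZMod m → V) : Prop :=
  Function.Injective γ ∧ ∀ k, r (γ k) (γ (k + 1))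

theorem card_isCyclicSeq_eq_card_mul {V : Type*} [AddGroup V] {r : V → V → Prop}
    (hr : ∀ a u v, r (u + a) (v + a) ↔ r u v) (m : ℕ) (v : V) :
    Nat.card {γ // IsCyclicSeq r m γ} =
      Nat.card V * Nat.card {γ // IsCyclicSeq r m γ ∧ γ 0 = v} := by
  have add_right {γ : ZMod m → V} (hγ : IsCyclicSeq r m γ) (a : V) :
      IsCyclicSeq r m fun k => γ k + a :=
    ⟨(add_left_injective a).comp hγ.1, fun k => (hr a _ _).2 (hγ.2 k)⟩
  rw [← Nat.card_prod]
  exact Nat.card_congr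
    { toFun := fun γ => (γ.1 0, ⟨fun k => γ.1 k + (-γ.1 0 + v), add_right γ.2 _, by simp⟩)
      invFun := fun x => ⟨fun k => x.2.1 k + (-v + x.1), add_right x.2.2.1 _⟩
      left_inv := fun γ => by simp [add_assoc]
      right_inv := by
        rintro ⟨a, γ, hγ, rfl⟩
        simp [add_assoc] }

theorem rltAdj_add_right (n : ℕ) (a u v : ZMod n) : rltAdj n (u + a) (v + a) ↔ rltAdj n u v := by
  simp only [rltAdj, add_sub_add_right_eq_sub]

section Switching

variable {α β : Type*} [LinearOrder α] [LinearOrder β]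

/-- The transitive tournament `<` with the arcs between vertices of different colours reversed. -/
def SwitchedAdj (e : α → Bool) (u v : α) : Prop :=
  u < v ↔ e u = e v

/-- The colour of `v` forced by a walk `p :: l` of a switched tournament that starts with colour `b`
at `p`: the colour changes at each step that is not an ascent. Off the walk the value is junk. -/
def walkColor (p : α) (b : Bool) : List α → α → Bool
  | [], _ => b
  | x :: l, v => if v = x then b == decide (p < x) else walkColor x (b == decide (p < x)) l v

theorem isChain_switchedAdj_iff (e : α → Bool) (p : α) {l : List α} (hl : l.Nodup) :
    (p :: l).IsChain (SwitchedAdj e) ↔ ∀ v ∈ l, e v = walkColor p (e p) l v := by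
  induction l generalizing p with
  | nil => simp
  | cons x l ih =>
    obtain ⟨hx, hl⟩ := List.nodup_cons.1 hl
    have step : SwitchedAdj e p x ↔ e x = (e p == decide (p < x)) := by
      rw [SwitchedAdj]
      by_cases p < x <;> cases e p <;> cases e x <;> simp_all
    rw [List.isChain_cons_cons, ih x hl, List.forall_mem_cons, walkColor, if_pos rfl, step]
    refine and_congr_right fun hpx => forall₂_congr fun v hv => ?_
    rw [walkColor, if_neg (ne_of_mem_of_not_mem hv hx), hpx]

theorem walkColor_map {f : α → β} (hf : StrictMono f) (p : α) (b : Bool) (l : List α) (v : α) :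
    walkColor (f p) b (l.map f) (f v) = walkColor p b l v := by
  induction l generalizing p b with
  | nil => rfl
  | cons x l ih => simp only [List.map_cons, walkColor, hf.injective.eq_iff, hf.lt_iff_lt, ih]

end Switching

theorem rltAdj_iff_switchedAdj (m : ℕ) (i j : ZMod (2 * m + 1)) :
    rltAdj (2 * m + 1) i j ↔ SwitchedAdj Nat.bodd (2 * i).val (2 * j).val := by
  have bodd_eq_iff (a b : ℕ) : a.bodd = b.bodd ↔ a % 2 = b % 2 := by
    rw [Nat.mod_two_of_bodd, Nat.mod_two_of_bodd]
    cases a.bodd <;> cases b.bodd <;> simp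
  have hdvd : ((2 * m + 1 : ℕ) : ℤ) ∣ 2 * ((j - i).val : ℤ) - ((2 * j).val - (2 * i).val) := by
    rw [← ZMod.intCast_zmod_eq_zero_iff_dvd]
    push_cast
    simp only [ZMod.natCast_val, ZMod.cast_id', id_eq]
    ring
  have hd := ZMod.val_lt (j - i)
  have hp := ZMod.val_lt (2 * i)
  have hq := ZMod.val_lt (2 * j)
  rw [rltAdj, Finset.mem_Icc, SwitchedAdj, bodd_eq_iff]
  generalize (j - i).val = d at *
  generalize (2 * i).val = p at *
  generalize (2 * j).val = q at *
  obtain ⟨t, ht⟩ := hdvd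
  push_cast at ht
  have ht0 : -1 < t := by nlinarith
  have ht3 : t < 3 := by nlinarith
  interval_cases t <;> omega

theorem sum_perm_ofFn {M : Type*} [AddCommMonoid M] (n : ℕ) (F : List (Fin n) → M) :
    ∑ σ : Perm (Fin n), F (List.ofFn σ) = ((List.finRange n).permutations'.map F).sum := by
  classical
  have hperm := List.permutations_perm_permutations' (List.finRange n)
  have hnodup : (List.finRange n).permutations'.Nodup :=
    hperm.nodup_iff.1 (List.nodup_permutations _ (List.nodup_finRange n))
  have hinj : Function.Injective fun σ : Perm (Fin n) => List.ofFn σ :=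
    List.ofFn_injective.comp DFunLike.coe_injective
  have himage : Finset.univ.image (fun σ : Perm (Fin n) => List.ofFn σ) =
      (List.finRange n).permutations'.toFinset := by
    refine Finset.eq_of_subset_of_card_le (fun l hl => ?_) ?_
    · obtain ⟨σ, -, rfl⟩ := Finset.mem_image.1 hl
      rw [List.mem_toFinset, List.mem_permutations', ← List.ofFn_id]
      exact σ.ofFn_comp_perm id
    · rw [List.toFinset_card_of_nodup hnodup, ← hperm.length_eq, List.length_permutations,
        List.length_finRange, Finset.card_image_of_injective _ hinj, Finset.card_univ,
        Fintype.card_perm, Fintype.card_fin]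
  rw [← List.sum_toFinset F hnodup, ← himage, Finset.sum_image hinj.injOn]

theorem bijective_orderEmbedding_comp_perm (n : ℕ) (α : Type*) [LinearOrder α] :
    Function.Bijective fun x : (Fin n ↪o α) × Perm (Fin n) =>
      (⟨x.1 ∘ x.2, x.1.injective.comp x.2.injective⟩ :
        {f : Fin n → α // Function.Injective f}) := by
  constructor
  · rintro ⟨g, σ⟩ ⟨g', σ'⟩ h
    have h' : g ∘ σ = g' ∘ σ' := congrArg Subtype.val h
    obtain rfl : g = g' := by
      rw [← OrderEmbedding.range_inj, ← σ.surjective.range_comp g, h', σ'.surjective.range_comp]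
    obtain rfl : σ = σ' := Equiv.ext fun i => g.injective (congrFun h' i)
    rfl
  · rintro ⟨f, hf⟩
    have hmono : StrictMono (f ∘ Tuple.sort f) :=
      (Tuple.monotone_sort f).strictMono_of_injective (hf.comp (Tuple.sort f).injective)
    refine ⟨(OrderEmbedding.ofStrictMono _ hmono, (Tuple.sort f)⁻¹), Subtype.ext (funext ?_)⟩
    simp

theorem card_injective_ofFn (n : ℕ) {α : Type*} [LinearOrder α] [Finite α] (P : List α → Prop) :
    Nat.card {f : Fin n → α // Function.Injective f ∧ P (List.ofFn f)} =
      ((List.finRange n).permutations'.map fun l =>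
        Nat.card {g : Fin n ↪o α // P (l.map g)}).sum := by
  let e : {f : Fin n → α // Function.Injective f ∧ P (List.ofFn f)} ≃
      Σ σ : Perm (Fin n), {g : Fin n ↪o α // P ((List.ofFn σ).map g)} :=
    calc {f : Fin n → α // Function.Injective f ∧ P (List.ofFn f)}
      _ ≃ {f : {f : Fin n → α // Function.Injective f} // P (List.ofFn f.1)} :=
        (Equiv.subtypeSubtypeEquivSubtypeInter _ fun f => P (List.ofFn f)).symm
      _ ≃ {x : (Fin n ↪o α) × Perm (Fin n) // P ((List.ofFn x.2).map x.1)} :=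
        ((Equiv.ofBijective _ (bijective_orderEmbedding_comp_perm n α)).subtypeEquiv
          fun x => by simp [List.map_ofFn]).symm
      _ ≃ {x : Perm (Fin n) × (Fin n ↪o α) // P ((List.ofFn x.1).map x.2)} :=
        (Equiv.prodComm _ _).subtypeEquiv fun _ => Iff.rfl
      _ ≃ Σ σ : Perm (Fin n), {g : Fin n ↪o α // P ((List.ofFn σ).map g)} :=
        Equiv.subtypeProdEquivSigmaSubtype fun (σ : Perm (Fin n)) (g : Fin n ↪o α) =>
          P ((List.ofFn σ).map g)
  have : Finite (Fin n ↪o α) := DFunLike.finite _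
  rw [Nat.card_congr e, Nat.card_sigma,
    sum_perm_ofFn n fun l => Nat.card {g : Fin n ↪o α // P (l.map g)}]

/-- The number of ascents `false < true` in the word `e 0, …, e i`. -/
def ascents (e : ℕ → Bool) : ℕ → ℕ
  | 0 => 0
  | i + 1 => ascents e i + (!e i && e (i + 1)).toNat

theorem ascents_le_of_strictMono (e : ℕ → Bool) {n : ℕ} {h : Fin (n + 1) → ℕ} (hh : StrictMono h)
    (i : Fin (n + 1)) : ascents e i ≤ h i := by
  induction i using Fin.induction with
  | zero => exact Nat.zero_le _
  | succ i ih =>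
    have hlt := hh i.castSucc_lt_succ
    have hasc := (!e i && e (i + 1)).toNat_le
    rw [Fin.val_castSucc] at ih
    rw [Fin.val_succ, ascents]
    lia

theorem strictMono_div2_add_ascents {e : ℕ → Bool} {n : ℕ} {g : Fin (n + 1) → ℕ}
    (hg : StrictMono g) (he : ∀ i, (g i).bodd = e i) :
    StrictMono fun i => (g i).div2 + ascents e i := by
  refine Fin.strictMono_iff_lt_succ.2 fun i => ?_
  have hlt := hg i.castSucc_lt_succ
  have hi := Nat.bodd_add_div2 (g i.castSucc)
  have hsucc := Nat.bodd_add_div2 (g i.succ)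
  rw [he, Fin.val_castSucc] at hi
  rw [he, Fin.val_succ] at hsucc
  rw [Fin.val_castSucc, Fin.val_succ, ascents]
  cases h₀ : e i <;> cases h₁ : e (i + 1) <;>
    simp only [h₀, h₁, Bool.toNat_false, Bool.toNat_true, Bool.not_false, Bool.not_true,
      Bool.and_true, Bool.and_false] at hi hsucc ⊢ <;> lia

theorem strictMono_bit_sub_ascents (e : ℕ → Bool) {n : ℕ} {h : Fin (n + 1) → ℕ}
    (hh : StrictMono h) :
    StrictMono fun i : Fin (n + 1) => Nat.bit (e i) (h i - ascents e i) := by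
  refine Fin.strictMono_iff_lt_succ.2 fun i => ?_
  have hlt := hh i.castSucc_lt_succ
  have hi := ascents_le_of_strictMono e hh i.castSucc
  rw [Fin.val_castSucc] at hi
  rw [Fin.val_castSucc, Fin.val_succ, ascents, Nat.bit_val, Nat.bit_val]
  cases e i <;> cases e (i + 1) <;>
    simp only [Bool.toNat_false, Bool.toNat_true, Bool.not_false, Bool.not_true, Bool.and_true,
      Bool.and_false] <;> lia

theorem card_orderEmbedding_fin (n N : ℕ) : Nat.card (Fin n ↪o Fin N) = N.choose n := by
  rw [Nat.card_congr Set.powersetCard.ofFinEmbEquiv, Set.powersetCard.card, Nat.card_fin]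

theorem card_orderEmbedding_bodd_eq (m n : ℕ) (e : ℕ → Bool) :
    Nat.card {g : Fin (n + 1) ↪o Fin (2 * m) // ∀ i, (g i : ℕ).bodd = e i} =
      (m + ascents e n).choose (n + 1) := by
  have compress_mono (g : {g : Fin (n + 1) ↪o Fin (2 * m) // ∀ i, (g i : ℕ).bodd = e i}) :
      StrictMono fun i : Fin (n + 1) => (g.1 i : ℕ).div2 + ascents e i :=
    strictMono_div2_add_ascents (g := fun i => (g.1 i : ℕ)) g.1.strictMono g.2
  have expand_mono (h : Fin (n + 1) ↪o Fin (m + ascents e n)) :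
      StrictMono fun i : Fin (n + 1) => Nat.bit (e i) (h i - ascents e i) :=
    strictMono_bit_sub_ascents e (h := fun i => (h i : ℕ)) h.strictMono
  have ascents_le (h : Fin (n + 1) ↪o Fin (m + ascents e n)) (i : Fin (n + 1)) :
      ascents e i ≤ h i :=
    ascents_le_of_strictMono e (h := fun i => (h i : ℕ)) h.strictMono i
  rw [← card_orderEmbedding_fin]
  refine Nat.card_congr
    { toFun := fun g => OrderEmbedding.ofStrictMono
        (fun i => ⟨(g.1 i : ℕ).div2 + ascents e i, ?_⟩) (compress_mono g)
      invFun := fun h => ⟨OrderEmbedding.ofStrictMono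
        (fun i => ⟨Nat.bit (e i) (h i - ascents e i), ?_⟩) (expand_mono h),
        fun i => Nat.bodd_bit _ _⟩
      left_inv := fun g => ?_
      right_inv := fun h => ?_ }
  · refine ((compress_mono g).monotone (Fin.le_last i)).trans_lt (Nat.add_lt_add_right ?_ _)
    have := (g.1 (Fin.last n)).isLt
    rw [Nat.div2_val]
    lia
  · refine ((expand_mono h).monotone (Fin.le_last i)).trans_lt ?_
    have := (h (Fin.last n)).isLt
    have := ascents_le h (Fin.last n)
    have := (e n).toNat_le
    rw [Fin.val_last] at *
    rw [Nat.bit_val]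
    lia
  · ext i
    change Nat.bit (e i) ((g.1 i : ℕ).div2 + ascents e i - ascents e i) = g.1 i
    rw [Nat.add_sub_cancel, ← g.2 i, Nat.bit_bodd_div2]
  · ext i
    change (Nat.bit (e i) (h i - ascents e i)).div2 + ascents e i = h i
    rw [Nat.div2_bit, Nat.sub_add_cancel (ascents_le h i)]

theorem forall_rel_add_one_iff_isChain {α : Type*} (r : α → α → Prop) {n : ℕ}
    (c : Fin (n + 1) → α) : (∀ k, r (c k) (c (k + 1))) ↔ (List.ofFn c ++ [c 0]).IsChain r := by
  let c' : Fin (n + 2) → α := Fin.snoc c (c 0)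
  have hcastSucc (k : Fin (n + 1)) : c' k.castSucc = c k := Fin.snoc_castSucc (α := fun _ => α) ..
  have hlast : c' (Fin.last (n + 1)) = c 0 := Fin.snoc_last (α := fun _ => α) ..
  have hsucc (k : Fin (n + 1)) : c' k.succ = c (k + 1) := by
    refine Fin.lastCases ?_ (fun k => ?_) k
    · rw [Fin.last_add_one, Fin.succ_last, hlast]
    · rw [Fin.coeSucc_eq_succ, Fin.succ_castSucc, hcastSucc]
  have hlist : List.ofFn c ++ [c 0] = List.ofFn c' := by
    rw [List.ofFn_succ' c', List.concat_eq_append, hlast, funext hcastSucc]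
  rw [hlist, List.isChain_ofFn]
  simp only [← hsucc, ← hcastSucc]
  exact ⟨fun h i hi => h ⟨i, Nat.lt_of_succ_lt_succ hi⟩, fun h k => h k (Nat.succ_lt_succ k.isLt)⟩

theorem card_injective_apply_zero_eq_last (n N : ℕ) (P : (Fin (n + 1) → Fin (N + 1)) → Prop) :
    Nat.card {c : Fin (n + 1) → Fin (N + 1) //
        (Function.Injective c ∧ P c) ∧ c 0 = Fin.last N} =
      Nat.card {f : Fin n → Fin N //
        Function.Injective f ∧ P (Fin.cons (Fin.last N) (Fin.castSucc ∘ f))} := by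
  let extend (f : Fin n → Fin N) : Fin (n + 1) → Fin (N + 1) :=
    Fin.cons (Fin.last N) (Fin.castSucc ∘ f)
  have extend_inj {f : Fin n → Fin N} (hf : Function.Injective f) :
      Function.Injective (extend f) :=
    Fin.cons_injective_iff.2 ⟨fun ⟨i, hi⟩ => (Fin.castSucc_lt_last (f i)).ne hi,
      (Fin.castSucc_injective N).comp hf⟩
  refine (Nat.card_congr (Equiv.ofBijective
    (fun f => ⟨extend f.1, ⟨extend_inj f.2.1, f.2.2⟩, Fin.cons_zero _ _⟩)
    ⟨fun f f' h => ?_, ?_⟩)).symm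
  · have hcomp : Fin.castSucc ∘ f.1 = Fin.castSucc ∘ f'.1 :=
      Fin.cons_right_injective (α := fun _ => Fin (N + 1)) _ (congrArg Subtype.val h)
    exact Subtype.ext ((Fin.castSucc_injective N).comp_left hcomp)
  · rintro ⟨c, ⟨hc, hP⟩, h0⟩
    have hne (i : Fin n) : c i.succ ≠ Fin.last N := fun h => i.succ_ne_zero (hc (h.trans h0.symm))
    have hc' : extend (fun i => (c i.succ).castPred (hne i)) = c := by
      simp only [extend, ← h0]
      exact Fin.cons_self_tail c
    refine ⟨⟨fun i => (c i.succ).castPred (hne i), fun i j hij => ?_, (congrArg P hc').mpr hP⟩,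
      Subtype.ext hc'⟩
    exact Fin.succ_injective n (hc (Fin.castPred_inj.1 hij))

theorem card_isCyclicSeq_rltAdj_apply_zero (n m : ℕ) :
    Nat.card {γ // IsCyclicSeq (rltAdj (2 * m + 1)) (n + 1) γ ∧ γ 0 = m} =
      Nat.card {f : Fin n → Fin (2 * m) // Function.Injective f ∧
        (2 * m :: ((List.ofFn f).map Fin.val ++ [2 * m])).IsChain (SwitchedAdj Nat.bodd)} := by
  have h2 : IsUnit (2 : ZMod (2 * m + 1)) :=
    mod_cast (ZMod.isUnit_iff_coprime 2 (2 * m + 1)).2 (by simp)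
  let double : ZMod (2 * m + 1) ≃ Fin (2 * m + 1) := h2.unit.mulLeft
  have double_mid : double m = Fin.last (2 * m) := by
    apply Fin.ext
    change (2 * (m : ZMod (2 * m + 1))).val = 2 * m
    exact_mod_cast ZMod.val_cast_of_lt (Nat.lt_succ_self (2 * m))
  let r (u v : Fin (2 * m + 1)) : Prop := SwitchedAdj Nat.bodd u.val v.val
  have e : {γ // IsCyclicSeq (rltAdj (2 * m + 1)) (n + 1) γ ∧ γ 0 = m} ≃
      {c : Fin (n + 1) → Fin (2 * m + 1) //
        (Function.Injective c ∧ (List.ofFn c ++ [c 0]).IsChain r) ∧ c 0 = Fin.last (2 * m)} :=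
    (Equiv.arrowCongr (Equiv.refl (ZMod (n + 1))) double).subtypeEquiv fun γ =>
      and_congr (and_congr (double.comp_injective γ).symm
        ((forall_congr' fun k => rltAdj_iff_switchedAdj m _ _).trans
          (forall_rel_add_one_iff_isChain r (double ∘ γ))))
        (by rw [← double_mid]; exact double.injective.eq_iff.symm)
  rw [Nat.card_congr e, card_injective_apply_zero_eq_last]
  refine Nat.card_congr (Equiv.subtypeEquivRight fun f => and_congr_right fun _ => ?_)
  have hlist : 2 * m :: ((List.ofFn f).map Fin.val ++ [2 * m]) =
      (Fin.last (2 * m) :: (List.ofFn (Fin.castSucc ∘ f) ++ [Fin.last (2 * m)])).map Fin.val := by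
    simp [List.map_ofFn, Function.comp_def]
  rw [hlist, List.isChain_map, List.ofFn_cons, Fin.cons_zero, List.cons_append]

/-- The colour of `v` forced by the closed walk `n, l, n` when its top vertex `n` has colour
`false`. The walk closes up consistently if and only if `n` itself is forced to be `false`. -/
def closedWalkColor (n : ℕ) (l : List ℕ) (v : ℕ) : Bool :=
  walkColor n false (l ++ [n]) v

theorem isChain_closedWalk_iff {m n : ℕ} {l : List (Fin n)} (hl : l.Perm (List.finRange n))
    (g : Fin n ↪o Fin (2 * m)) :
    (2 * m :: ((l.map g).map Fin.val ++ [2 * m])).IsChain (SwitchedAdj Nat.bodd) ↔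
      closedWalkColor n (l.map Fin.val) n = false ∧
        ∀ i, (g i : ℕ).bodd = closedWalkColor n (l.map Fin.val) i := by
  let G : Fin (n + 1) → ℕ := Fin.snoc (fun i => (g i : ℕ)) (2 * m)
  have hcastSucc (i : Fin n) : G i.castSucc = g i := Fin.snoc_castSucc (α := fun _ => ℕ) ..
  have hlast : G (Fin.last n) = 2 * m := Fin.snoc_last (α := fun _ => ℕ) ..
  have hG : StrictMono G := by
    intro i j hij
    obtain ⟨i, rfl⟩ := Fin.exists_castSucc_eq.2 (hij.trans_le (Fin.le_last j)).ne
    refine Fin.lastCases (fun _ => ?_) (fun j hij => ?_) j hij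
    · rw [hcastSucc, hlast]
      exact (g i).isLt
    · rw [hcastSucc, hcastSucc]
      exact g.strictMono (Fin.castSucc_lt_castSucc_iff.1 hij)
  let w : List (Fin (n + 1)) := l.map Fin.castSucc ++ [Fin.last n]
  have hw : w.Perm (List.finRange (n + 1)) := by
    rw [List.finRange_succ_last]
    exact (hl.map _).append_right _
  have hwG : (l.map g).map Fin.val ++ [2 * m] = w.map G := by
    simp [w, hcastSucc, hlast, Function.comp_def]
  have hw_val : l.map Fin.val ++ [n] = w.map Fin.val := by
    simp [w, Function.comp_def]
  have hcolor (v : Fin (n + 1)) :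
      walkColor (2 * m) (2 * m).bodd (w.map G) (G v) = closedWalkColor n (l.map Fin.val) v := by
    rw [Nat.bodd_mul, Nat.bodd_two, Bool.false_and, ← hlast, walkColor_map hG,
      ← walkColor_map Fin.val_strictMono, Fin.val_last, ← hw_val, closedWalkColor]
  have hw_nodup : w.Nodup := hw.nodup_iff.2 (List.nodup_finRange _)
  rw [hwG, isChain_switchedAdj_iff _ _ (hw_nodup.map hG.injective)]
  simp only [List.forall_mem_map, hcolor, hw.mem_iff, List.mem_finRange, forall_const,
    Fin.forall_fin_succ', hcastSucc, hlast, Fin.val_last, Fin.val_castSucc]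
  rw [Nat.bodd_mul, Nat.bodd_two, Bool.false_and, and_comm, eq_comm]

/-- The numbers of ascents in the words of colours of `0, …, n - 1` forced by the closed walks
`n, l, n` with `l` an ordering of `0, …, n - 1`, over those that close up consistently. -/
def closedWalkAscents (n : ℕ) : List ℕ :=
  ((List.range n).permutations'.filter fun l => closedWalkColor n l n = false).map fun l =>
    ascents (closedWalkColor n l) (n - 1)

theorem card_isChain_closedWalk {n : ℕ} (m : ℕ) {l : List (Fin (n + 1))}
    (hl : l.Perm (List.finRange (n + 1))) :
    Nat.card {g : Fin (n + 1) ↪o Fin (2 * m) //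
        (2 * m :: ((l.map g).map Fin.val ++ [2 * m])).IsChain (SwitchedAdj Nat.bodd)} =
      if closedWalkColor (n + 1) (l.map Fin.val) (n + 1) = false then
        (m + ascents (closedWalkColor (n + 1) (l.map Fin.val)) n).choose (n + 1) else 0 := by
  simp only [isChain_closedWalk_iff hl]
  split_ifs with h
  · simp only [h, true_and, card_orderEmbedding_bodd_eq]
  · simp only [h, false_and, Nat.card_of_isEmpty, Bool.true_eq_false]

theorem card_isCyclicSeq_rltAdj (n m : ℕ) :
    Nat.card {γ // IsCyclicSeq (rltAdj (2 * m + 1)) (n + 2) γ} = (2 * m + 1) *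
      ((closedWalkAscents (n + 1)).map fun a => (m + a).choose (n + 1)).sum := by
  have hrange : (List.range (n + 1)).permutations' =
      (List.finRange (n + 1)).permutations'.map (List.map Fin.val) := by
    rw [List.map_permutations', List.map_coe_finRange_eq_range]
  rw [card_isCyclicSeq_eq_card_mul (fun a u v => rltAdj_add_right _ a u v) _ (m : ZMod (2 * m + 1)),
    Nat.card_zmod, card_isCyclicSeq_rltAdj_apply_zero,
    card_injective_ofFn (n + 1) fun l : List (Fin (2 * m)) =>
      (2 * m :: (l.map Fin.val ++ [2 * m])).IsChain (SwitchedAdj Nat.bodd),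
    List.map_congr_left fun l hl => card_isChain_closedWalk m (List.mem_permutations'.1 hl),
    closedWalkAscents, hrange, List.filter_map, List.map_map, List.map_map,
    List.sum_map_ite]
  simp only [List.map_const', List.sum_replicate, smul_zero, add_zero, Function.comp_def,
    Nat.add_sub_cancel]

theorem closedWalkAscents_seven_count :
    (∀ a ∈ closedWalkAscents 7, a ∈ [1, 2, 3]) ∧
      [1, 2, 3].map (closedWalkAscents 7).count = [568, 1696, 392] := by
  decide +kernel

theorem sum_map_closedWalkAscents_seven (f : ℕ → ℕ) :
    ((closedWalkAscents 7).map f).sum = 568 * f 1 + 1696 * f 2 + 392 * f 3 := by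
  obtain ⟨hmem, hcount⟩ := closedWalkAscents_seven_count
  obtain ⟨h1, h2, h3⟩ : (closedWalkAscents 7).count 1 = 568 ∧
      (closedWalkAscents 7).count 2 = 1696 ∧ (closedWalkAscents 7).count 3 = 392 := by
    simpa using hcount
  have hsub : (closedWalkAscents 7).toFinset ⊆ {1, 2, 3} := fun a ha => by
    simpa using hmem a (List.mem_toFinset.1 ha)
  rw [Finset.sum_list_map_count, Finset.sum_subset hsub fun a _ ha => by
    rw [List.count_eq_zero_of_not_mem (mt List.mem_toFinset.2 ha), zero_smul]]
  simp [h1, h2, h3, add_assoc]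

theorem cast_factorial_mul_choose (k N : ℕ) :
    (k.factorial * N.choose k : ℤ) = ∏ i ∈ Finset.range k, ((N : ℤ) - i) := by
  rw [← descPochhammer_eval_eq_prod_range, descPochhammer_eval_eq_descFactorial,
    Nat.descFactorial_eq_factorial_mul_choose, Nat.cast_mul]

theorem numCycles_rltAdj_eight (m : ℕ) :
    numCycles (rltAdj (2 * m + 1)) 8 = (2 * m + 1) *
      (71 * (m + 1).choose 7 + 212 * (m + 2).choose 7 + 49 * (m + 3).choose 7) := by
  have hcard := card_isCyclicSeq_rltAdj 6 m
  rw [sum_map_closedWalkAscents_seven] at hcard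
  exact Nat.div_eq_of_eq_mul_right (by norm_num) (hcard.trans (by ring))

theorem eight_cycles_of_RLT (n : ℕ) (hodd : Odd n) (hn : 1 ≤ n) :
    161280 * (numCycles (rltAdj n) 8 : ℤ) =
      ((n : ℤ) + 1) * (n : ℤ) * ((n : ℤ) - 1) * ((n : ℤ) - 3) * ((n : ℤ) - 5) *
        ((n : ℤ) - 7) * (83 * (n : ℤ) ^ 2 - 575 * (n : ℤ) + 510) := by
  obtain ⟨m, rfl⟩ := hodd
  have h1 := cast_factorial_mul_choose 7 (m + 1)
  have h2 := cast_factorial_mul_choose 7 (m + 2)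
  have h3 := cast_factorial_mul_choose 7 (m + 3)
  simp only [Finset.prod_range_succ, Finset.prod_range_zero, Nat.factorial] at h1 h2 h3
  rw [numCycles_rltAdj_eight]
  push_cast at h1 h2 h3 ⊢
  linear_combination 32 * (2 * m + 1 : ℤ) * (71 * h1 + 212 * h2 + 49 * h3)
end
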